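/- Let α ∈ (2,3), n ≥ 2, and let γ ∈ H^{(1+α)/2,2}(ℝ/ℤ,ℝⁿ) be injective and parametrized by arc-length. Then for every h ∈ H^{(1+α)/2,2}(ℝ/ℤ,ℝⁿ) the directional derivative of E^α at γ in direction h exists and equals the principal value δE^α(γ;h) = lim_{ε↘0} ∬_{U_ε} [ (α−2)·⟨γ'(u),h'(u)⟩/|w|^α + 2·⟨γ'(u),h'(u)⟩/|γ(u+w)−γ(u)|^α − α·⟨γ(u+w)−γ(u), h(u+w)−h(u)⟩/|γ(u+w)−γ(u)|^{α+2} ] dw du, and in particular this limit exists. -/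

import Mathlib

open MeasureTheory Filter Set
open scoped RealInnerProductSpace ENNReal Topology

noncomputable section

/-- `ℝⁿ` -/
abbrev Rn (n : ℕ) := EuclideanSpace ℝ (Fin n)

variable {n : ℕ}

/-- A 1-periodic curve is injective as a map on `ℝ/ℤ`. -/
def PerInjective (γ : ℝ → Rn n) : Prop :=
  ∀ u v : ℝ, γ u = γ v → ∃ k : ℤ, v = u + k

/-- `γ` is a regular curve: `γ'(u) ≠ 0` for all `u`. -/
def RegularCurve (γ : ℝ → Rn n) : Prop := ∀ u : ℝ, deriv γ u ≠ 0

/-- `γ` is parametrized by arc-length: `|γ'(u)| = 1` for all `u`. -/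
def ArcLengthParam (γ : ℝ → Rn n) : Prop := ∀ u : ℝ, ‖deriv γ u‖ = 1

/-- The length `L(γ) = ∫₀¹ |γ'(θ)| dθ` of the closed curve `γ`. -/
def curveLen (γ : ℝ → Rn n) : ℝ := ∫ θ in (0:ℝ)..1, ‖deriv γ θ‖

/-- The arc length `L(γ|_{[u,u+w]}) = |∫_u^{u+w} |γ'(θ)| dθ|`. -/
def arcLen (γ : ℝ → Rn n) (u w : ℝ) : ℝ := |∫ θ in u..(u + w), ‖deriv γ θ‖|

/-- The intrinsic distance `d_γ(u+w,u)`. -/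
def idist (γ : ℝ → Rn n) (u w : ℝ) : ℝ :=
  min (arcLen γ u w) (curveLen γ - arcLen γ u w)

/-- The integrand of the O'Hara energy `E^α`. -/
def ohIntegrand (α : ℝ) (γ : ℝ → Rn n) (u w : ℝ) : ℝ :=
  (1 / ‖γ (u + w) - γ u‖ ^ α - 1 / idist γ u w ^ α) * ‖deriv γ (u + w)‖ * ‖deriv γ u‖

/-- The O'Hara energy `E^α`, with values in `[0,∞]`. -/
def oharaE (α : ℝ) (γ : ℝ → Rn n) : ℝ≥0∞ :=
  ∫⁻ u in Ioc (0:ℝ) 1, ∫⁻ w in Ioo (-(1:ℝ)/2) (1/2), ENNReal.ofReal (ohIntegrand α γ u w)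

/-- The O'Hara energy `E^α` as a real number. -/
def oharaER (α : ℝ) (γ : ℝ → Rn n) : ℝ := (oharaE α γ).toReal

/-- `[−1/2,−ε] ∪ [ε,1/2]`, the `w`-section of `U_ε`. -/
def Wset (ε : ℝ) : Set ℝ := Icc (-(1:ℝ)/2) (-ε) ∪ Icc ε (1/2)

/-- The truncated O'Hara energy `E^α_ε`, an integral over `U_ε`. -/
def oharaEeps (α ε : ℝ) (γ : ℝ → Rn n) : ℝ :=
  ∫ u in Ioc (0:ℝ) 1, ∫ w in Wset ε, ohIntegrand α γ u w

/-- `F` has directional (Gâteaux) derivative `d` at `γ` in direction `h`. -/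
def HasDirDeriv (F : (ℝ → Rn n) → ℝ) (γ h : ℝ → Rn n) (d : ℝ) : Prop :=
  Tendsto (fun τ : ℝ => (F (γ + τ • h) - F γ) / τ) (𝓝[≠] (0:ℝ)) (𝓝 d)

/-- Squared Gagliardo seminorm `[f]²_{H^{s,2}}` of a 1-periodic map. -/
def gagliardoSq (s : ℝ) {E : Type*} [NormedAddCommGroup E] (f : ℝ → E) : ℝ≥0∞ :=
  ∫⁻ u in Ioc (0:ℝ) 1, ∫⁻ w in Ioo (-(1:ℝ)/2) (1/2),
    ENNReal.ofReal (‖f (u + w) - f u‖ ^ 2 / |w| ^ (1 + 2 * s))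

/-- Membership in the fractional Sobolev space `H^{1+σ,2}(ℝ/ℤ,ℝⁿ)`, `σ ∈ (0,1)`:
a 1-periodic `C¹` function whose derivative has finite Gagliardo seminorm of order `σ`. -/
def MemH1 (σ : ℝ) (γ : ℝ → Rn n) : Prop :=
  Function.Periodic γ 1 ∧ ContDiff ℝ 1 γ ∧ gagliardoSq σ (deriv γ) < ⊤

/-- The norm of `H^{1+σ,2}(ℝ/ℤ,ℝⁿ)`. -/
def H1Norm (σ : ℝ) (γ : ℝ → Rn n) : ℝ :=
  Real.sqrt (∫ u in Ioc (0:ℝ) 1, (‖γ u‖ ^ 2 + ‖deriv γ u‖ ^ 2)) +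
    Real.sqrt ((gagliardoSq σ (deriv γ)).toReal)

/-- Membership of a 1-periodic map in `L²(ℝ/ℤ)`. -/
def MemL2per {E : Type*} [NormedAddCommGroup E] (f : ℝ → E) : Prop :=
  Function.Periodic f 1 ∧ AEStronglyMeasurable f (volume : Measure ℝ) ∧
    IntegrableOn (fun u => ‖f u‖ ^ 2) (Ioc (0:ℝ) 1) volume

/-- Membership in the fractional Sobolev space `H^{s,2}(ℝ/ℤ)`, `s ∈ (0,1)`. -/
def MemHs0 (s : ℝ) {E : Type*} [NormedAddCommGroup E] (f : ℝ → E) : Prop :=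
  MemL2per f ∧ gagliardoSq s f < ⊤

/-- The norm of `H^{s,2}(ℝ/ℤ)` for `s ∈ (0,1)`: `‖f‖_{L²} + [f]_{H^{s,2}}`. -/
def Hs0Norm (s : ℝ) {E : Type*} [NormedAddCommGroup E] (f : ℝ → E) : ℝ :=
  Real.sqrt (∫ u in Ioc (0:ℝ) 1, ‖f u‖ ^ 2) + Real.sqrt ((gagliardoSq s f).toReal)

/-- The `k`-th Fourier coefficient (`j`-th component) of a 1-periodic curve. -/
def fCoef (γ : ℝ → Rn n) (k : ℤ) (j : Fin n) : ℂ :=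
  ∫ u in (0:ℝ)..1, (γ u j : ℂ) * Complex.exp ((-2) * (Real.pi : ℂ) * Complex.I * (k : ℂ) * (u : ℂ))

/-- Membership in `H^{s,2}(ℝ/ℤ,ℝⁿ)` via the Fourier characterization:
`((1+|k|²)^{s/2} γ̂(k))_k ∈ ℓ²`. -/
def MemHF (s : ℝ) (γ : ℝ → Rn n) : Prop :=
  Function.Periodic γ 1 ∧ Continuous γ ∧
    Summable (fun k : ℤ => (1 + (k : ℝ) ^ 2) ^ s * ∑ j, ‖fCoef γ k j‖ ^ 2)

/-- The squared Fourier norm of `H^{s,2}(ℝ/ℤ,ℝⁿ)`. -/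
def fNormSq (s : ℝ) (γ : ℝ → Rn n) : ℝ :=
  ∑' k : ℤ, (1 + (k : ℝ) ^ 2) ^ s * ∑ j, ‖fCoef γ k j‖ ^ 2

/-- C¹-norm of a 1-periodic map. -/
def c1Norm (f : ℝ → Rn n) : ℝ := ⨆ u : Icc (0:ℝ) 1, (‖f u.1‖ + ‖deriv f u.1‖)

/-- The integrand of `Q(γ,h)`. -/
def Qintegrand (α : ℝ) (γ h : ℝ → Rn n) (u w : ℝ) : ℝ :=
  ⟪deriv γ u, deriv h u⟫ / |w| ^ α
    - ⟪γ (u + w) - γ u, h (u + w) - h u⟫ / |w| ^ (α + 2)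

/-- The integrand of `R(γ,h)`. -/
def Rintegrand (α : ℝ) (γ h : ℝ → Rn n) (u w : ℝ) : ℝ :=
  2 * ⟪deriv γ u, deriv h u⟫ * (1 / ‖γ (u + w) - γ u‖ ^ α - 1 / |w| ^ α)
    - α * ⟪γ (u + w) - γ u, h (u + w) - h u⟫ *
        (1 / ‖γ (u + w) - γ u‖ ^ (α + 2) - 1 / |w| ^ (α + 2))

/-- `R(γ,h)`, an absolutely convergent double integral over `(ℝ/ℤ) × [−1/2,1/2]`. -/
def Rval (α : ℝ) (γ h : ℝ → Rn n) : ℝ :=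
  ∫ p in (Ioc (0:ℝ) 1) ×ˢ (Icc (-(1:ℝ)/2) (1/2)), Rintegrand α γ h p.1 p.2

/-!
The excess of arc length over chord is built from Cauchy–Schwarz defects `‖a‖ * ‖b‖ - ⟪a, b⟫` of
values and means of `γ'`, hence is controlled by the mean-square oscillation of `γ'` on the
segment. Along `t ↦ γ + t • h` the integrand of `E^α` is therefore Lipschitz in `t` with constant
`C * (1 + oscillation / |w| ^ α)`, and a dilation argument bounds the integral of this constant by
the Gagliardo seminorms of `γ'` and `h'`. Dominated differentiation yields the derivative of the
energy as an absolutely convergent integral, namely the limit of its truncations to `ε ≤ |w|`. On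
each truncation it agrees with the principal value integrand, since the two differ by terms whose
integral over `u` vanishes by periodicity or is odd in `w`.
-/

/-- `f` is bounded by `K` and `K`-Lipschitz on `T`. Using one constant for both properties makes
the bounds multiplicative: a product of such functions is again of this kind, with a constant
proportional to the product of the constants. -/
structure BddLipOn {X F : Type*} [PseudoMetricSpace X] [SeminormedAddCommGroup F] (K : ℝ)
    (T : Set X) (f : X → F) : Prop where
  norm_le : ∀ ⦃t⦄, t ∈ T → ‖f t‖ ≤ K
  norm_sub_le : ∀ ⦃t s⦄, t ∈ T → s ∈ T → ‖f t - f s‖ ≤ K * dist t s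

namespace BddLipOn

variable {X F : Type*} [PseudoMetricSpace X] {T : Set X} {K K₁ K₂ B c p : ℝ}

section SeminormedAddCommGroup

variable [SeminormedAddCommGroup F] {f g : X → F}

lemma mono (hf : BddLipOn K₁ T f) (h : K₁ ≤ K₂) : BddLipOn K₂ T f where
  norm_le _ ht := (hf.norm_le ht).trans h
  norm_sub_le _ _ ht hs := (hf.norm_sub_le ht hs).trans (by gcongr)

lemma congr (hf : BddLipOn K T f) (h : EqOn g f T) : BddLipOn K T g where
  norm_le _ ht := h ht ▸ hf.norm_le ht
  norm_sub_le _ _ ht hs := h ht ▸ h hs ▸ hf.norm_sub_le ht hs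

lemma lipschitzOnWith (hf : BddLipOn K T f) : LipschitzOnWith (Real.nnabs K) f T :=
  LipschitzOnWith.of_dist_le_mul fun t ht s hs => by
    rw [dist_eq_norm, Real.coe_nnabs]
    exact (hf.norm_sub_le ht hs).trans (by gcongr; exact le_abs_self K)

lemma add (hf : BddLipOn K₁ T f) (hg : BddLipOn K₂ T g) :
    BddLipOn (K₁ + K₂) T (fun t => f t + g t) where
  norm_le _ ht := norm_add_le_of_le (hf.norm_le ht) (hg.norm_le ht)
  norm_sub_le _ _ ht hs := by
    rw [add_sub_add_comm, add_mul]
    exact norm_add_le_of_le (hf.norm_sub_le ht hs) (hg.norm_sub_le ht hs)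

lemma sub (hf : BddLipOn K₁ T f) (hg : BddLipOn K₂ T g) :
    BddLipOn (K₁ + K₂) T (fun t => f t - g t) where
  norm_le _ ht := norm_sub_le_of_le (hf.norm_le ht) (hg.norm_le ht)
  norm_sub_le _ _ ht hs := by
    rw [sub_sub_sub_comm, add_mul]
    exact norm_sub_le_of_le (hf.norm_sub_le ht hs) (hg.norm_sub_le ht hs)

lemma norm (hf : BddLipOn K T f) : BddLipOn K T (fun t => ‖f t‖) where
  norm_le _ ht := (norm_norm _).trans_le (hf.norm_le ht)
  norm_sub_le _ _ ht hs := (abs_norm_sub_norm_le _ _).trans (hf.norm_sub_le ht hs)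

end SeminormedAddCommGroup

lemma affine [SeminormedAddCommGroup F] [NormedSpace ℝ F] {T : Set ℝ} {a b : F}
    (ha : ‖a‖ ≤ K₁) (hb : ‖b‖ ≤ K₂) (hT : ∀ t ∈ T, |t| ≤ 1) :
    BddLipOn (K₁ + K₂) T (fun t => a + t • b) where
  norm_le t ht := by
    refine norm_add_le_of_le ha ((norm_smul_le _ _).trans ?_)
    exact (mul_le_of_le_one_left (norm_nonneg b) (hT t ht)).trans hb
  norm_sub_le t s _ _ := by
    rw [add_sub_add_left_eq_sub, ← sub_smul, norm_smul, Real.dist_eq, Real.norm_eq_abs, mul_comm]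
    gcongr
    exact hb.trans (le_add_of_nonneg_left ((norm_nonneg a).trans ha))

section Real

variable {f g : X → ℝ}

lemma const_mul (hf : BddLipOn K T f) (a : ℝ) : BddLipOn (|a| * K) T (fun t => a * f t) where
  norm_le _ ht := by
    rw [norm_mul, Real.norm_eq_abs a]
    exact mul_le_mul_of_nonneg_left (hf.norm_le ht) (abs_nonneg a)
  norm_sub_le _ _ ht hs := by
    rw [← mul_sub, norm_mul, mul_assoc, Real.norm_eq_abs a]
    exact mul_le_mul_of_nonneg_left (hf.norm_sub_le ht hs) (abs_nonneg a)

lemma min (hf : BddLipOn K T f) (hg : BddLipOn K T g) :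
    BddLipOn K T (fun t => min (f t) (g t)) where
  norm_le _ ht := abs_min_le_max_abs_abs.trans (max_le (hf.norm_le ht) (hg.norm_le ht))
  norm_sub_le _ _ ht hs := (abs_min_sub_min_le_max _ _ _ _).trans
    (max_le (hf.norm_sub_le ht hs) (hg.norm_sub_le ht hs))

lemma rpow_neg (hc : 0 < c) (hp : 0 ≤ p) (hf : BddLipOn K T f) (hcf : ∀ t ∈ T, c ≤ f t) :
    BddLipOn (c ^ (-p) + p * c ^ (-p - 1) * K) T (fun t => f t ^ (-p)) where
  norm_le t ht := by
    have hK : 0 ≤ K := (norm_nonneg _).trans (hf.norm_le ht)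
    rw [Real.norm_of_nonneg (Real.rpow_nonneg (hc.le.trans (hcf t ht)) _)]
    exact (Real.rpow_le_rpow_of_nonpos hc (hcf t ht) (neg_nonpos.2 hp)).trans
      (le_add_of_nonneg_right (by positivity))
  norm_sub_le t s ht hs := by
    have mean_value := (convex_Ici c).norm_image_sub_le_of_norm_hasDerivWithin_le
      (f := fun x : ℝ => x ^ (-p)) (f' := fun x => -p * x ^ (-p - 1))
      (C := p * c ^ (-p - 1)) (x := f s) (y := f t)
      (fun x hx => (Real.hasDerivAt_rpow_const
        (Or.inl (hc.trans_le (mem_Ici.1 hx)).ne')).hasDerivWithinAt)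
      (fun x hx => by
        rw [norm_mul, norm_neg, Real.norm_of_nonneg hp,
          Real.norm_of_nonneg (Real.rpow_nonneg (hc.le.trans hx) _)]
        gcongr ?_ * ?_
        exact Real.rpow_le_rpow_of_nonpos hc hx (by linarith))
      (hcf s hs) (hcf t ht)
    calc ‖f t ^ (-p) - f s ^ (-p)‖ ≤ p * c ^ (-p - 1) * ‖f t - f s‖ := mean_value
      _ ≤ p * c ^ (-p - 1) * (K * dist t s) := by gcongr; exact hf.norm_sub_le ht hs
      _ ≤ (c ^ (-p) + p * c ^ (-p - 1) * K) * dist t s := by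
        rw [← mul_assoc]
        gcongr
        exact le_add_of_nonneg_left (by positivity)

end Real

section InnerProductSpace

variable {E : Type*} [NormedAddCommGroup E] [InnerProductSpace ℝ E] {f g : X → E}

lemma inner (hf : BddLipOn K₁ T f) (hg : BddLipOn K₂ T g) :
    BddLipOn (2 * (K₁ * K₂)) T (fun t => ⟪f t, g t⟫) where
  norm_le t ht := by
    have hfg : ‖f t‖ * ‖g t‖ ≤ K₁ * K₂ :=
      mul_le_mul (hf.norm_le ht) (hg.norm_le ht) (norm_nonneg _)
        ((norm_nonneg _).trans (hf.norm_le ht))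
    linarith [norm_inner_le_norm (𝕜 := ℝ) (f t) (g t),
      mul_nonneg (norm_nonneg (f t)) (norm_nonneg (g t))]
  norm_sub_le t s ht hs := by
    have telescope : (⟪f t, g t⟫ : ℝ) - ⟪f s, g s⟫ = ⟪f t, g t - g s⟫ + ⟪f t - f s, g s⟫ := by
      rw [inner_sub_right, inner_sub_left]
      ring
    calc ‖(⟪f t, g t⟫ : ℝ) - ⟪f s, g s⟫‖
        ≤ ‖f t‖ * ‖g t - g s‖ + ‖f t - f s‖ * ‖g s‖ := by
          rw [telescope]
          exact norm_add_le_of_le (norm_inner_le_norm _ _) (norm_inner_le_norm _ _)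
      _ ≤ K₁ * (K₂ * dist t s) + K₁ * dist t s * K₂ := by
          have hK₁ : 0 ≤ K₁ := (norm_nonneg _).trans (hf.norm_le ht)
          gcongr
          exacts [hf.norm_le ht, hg.norm_sub_le ht hs, hf.norm_sub_le ht hs, hg.norm_le hs]
      _ = 2 * (K₁ * K₂) * dist t s := by ring

lemma mul {f g : X → ℝ} (hf : BddLipOn K₁ T f) (hg : BddLipOn K₂ T g) :
    BddLipOn (2 * (K₁ * K₂)) T (fun t => f t * g t) :=
  (hf.inner hg).congr fun t _ => mul_comm (f t) (g t)

/-- Written as `⟪f - g, f + g⟫ / (‖f‖ + ‖g‖)`, the difference of the norms inherits the size of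
`f - g` also in the Lipschitz constant. -/
lemma exists_norm_sub_norm (T : Set X) (E : Type*) [NormedAddCommGroup E]
    [InnerProductSpace ℝ E] (hc : 0 < c) (B : ℝ) :
    ∃ C : ℝ, ∀ ⦃K : ℝ⦄ ⦃f g : X → E⦄, BddLipOn B T f → BddLipOn B T g →
      (∀ t ∈ T, c ≤ ‖f t‖) → (∀ t ∈ T, c ≤ ‖g t‖) → BddLipOn K T (fun t => f t - g t) →
      BddLipOn (C * K) T (fun t => ‖f t‖ - ‖g t‖) := by
  refine ⟨8 * B * ((c + c) ^ (-1 : ℝ) + 1 * (c + c) ^ (-1 - 1 : ℝ) * (B + B)),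
    fun K f g hf hg hcf hcg hfg => ?_⟩
  have hinv := (hf.norm.add hg.norm).rpow_neg (c := c + c) (p := 1) (by positivity) zero_le_one
    fun t ht => add_le_add (hcf t ht) (hcg t ht)
  refine (((hfg.inner (hf.add hg)).mul hinv).mono (le_of_eq (by ring))).congr fun t ht => ?_
  have hpos : 0 < ‖f t‖ + ‖g t‖ := by linarith [hcf t ht, hcg t ht]
  change ‖f t‖ - ‖g t‖ = ⟪f t - g t, f t + g t⟫ * (‖f t‖ + ‖g t‖) ^ (-1 : ℝ)
  rw [Real.rpow_neg_one, ← div_eq_mul_inv, eq_div_iff hpos.ne', inner_sub_left, inner_add_right,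
    inner_add_right, real_inner_comm (f t) (g t), real_inner_self_eq_norm_sq,
    real_inner_self_eq_norm_sq]
  ring

/-- The Cauchy–Schwarz defect is quadratic in the distance of the two vectors, because
`2 (‖f‖ ‖g‖ - ⟪f, g⟫) = ‖f - g‖ ^ 2 - (‖f‖ - ‖g‖) ^ 2`. -/
lemma exists_cauchySchwarz_defect (T : Set X) (E : Type*) [NormedAddCommGroup E]
    [InnerProductSpace ℝ E] (hc : 0 < c) (B : ℝ) :
    ∃ C : ℝ, 0 ≤ C ∧ ∀ ⦃K : ℝ⦄ ⦃f g : X → E⦄, BddLipOn B T f → BddLipOn B T g →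
      (∀ t ∈ T, c ≤ ‖f t‖) → (∀ t ∈ T, c ≤ ‖g t‖) → BddLipOn K T (fun t => f t - g t) →
      BddLipOn (C * K ^ 2) T (fun t => ‖f t‖ * ‖g t‖ - ⟪f t, g t⟫) := by
  obtain ⟨C, hC⟩ := exists_norm_sub_norm T E hc B
  refine ⟨1 + C ^ 2, by positivity, fun K f g hf hg hcf hcg hfg => ?_⟩
  have hnorm := hC hf hg hcf hcg hfg
  refine ((((hfg.inner hfg).sub (hnorm.mul hnorm)).const_mul (1 / 2)).mono
    (le_of_eq ?_)).congr fun t _ => ?_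
  · rw [abs_of_pos one_half_pos]
    ring
  · change ‖f t‖ * ‖g t‖ - ⟪f t, g t⟫ = 1 / 2 * (⟪f t - g t, f t - g t⟫ - _)
    rw [real_inner_sub_sub_self]
    simp only [real_inner_self_eq_norm_sq]
    ring

end InnerProductSpace

end BddLipOn

lemma intervalIntegrable_segment {E : Type*} [NormedAddCommGroup E] {f : ℝ → E}
    (hf : Continuous f) (u w : ℝ) : IntervalIntegrable (fun x => f (u + w * x)) volume 0 1 :=
  (hf.comp (by fun_prop)).intervalIntegrable 0 1

section SegAvg

variable {E : Type*} [NormedAddCommGroup E] [NormedSpace ℝ E] {f g : ℝ → E}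

/-- The mean value of `f` over the oriented segment from `u` to `u + w`. The integral is taken
over the parameter of the segment rather than divided by its length, so that the mean over the
degenerate segment `w = 0` is `f u`. -/
def segAvg (f : ℝ → E) (u w : ℝ) : E := ∫ x in (0 : ℝ)..1, f (u + w * x)

lemma smul_segAvg (f : ℝ → E) (u w : ℝ) : w • segAvg f u w = ∫ y in u..(u + w), f y := by
  rw [segAvg, intervalIntegral.smul_integral_comp_add_mul, mul_zero, add_zero, mul_one]

lemma segAvg_const [CompleteSpace E] (a : E) (u w : ℝ) : segAvg (fun _ => a) u w = a := by
  simp [segAvg]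

lemma segAvg_zero_right [CompleteSpace E] (f : ℝ → E) (u : ℝ) : segAvg f u 0 = f u := by
  simp [segAvg]

lemma segAvg_zero_one (f : ℝ → E) : segAvg f 0 1 = ∫ x in (0 : ℝ)..1, f x := by
  simp [segAvg]

lemma continuous_segAvg (hf : Continuous f) : Continuous fun p : ℝ × ℝ => segAvg f p.1 p.2 :=
  intervalIntegral.continuous_parametric_intervalIntegral_of_continuous' (by fun_prop) 0 1

lemma segAvg_add (hf : Continuous f) (hg : Continuous g) (u w : ℝ) :
    segAvg (fun y => f y + g y) u w = segAvg f u w + segAvg g u w :=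
  intervalIntegral.integral_add (intervalIntegrable_segment hf u w)
    (intervalIntegrable_segment hg u w)

lemma segAvg_sub (hf : Continuous f) (hg : Continuous g) (u w : ℝ) :
    segAvg (fun y => f y - g y) u w = segAvg f u w - segAvg g u w :=
  intervalIntegral.integral_sub (intervalIntegrable_segment hf u w)
    (intervalIntegrable_segment hg u w)

lemma segAvg_smul (a : ℝ) (f : ℝ → E) (u w : ℝ) :
    segAvg (fun y => a • f y) u w = a • segAvg f u w :=
  intervalIntegral.integral_smul a _

lemma norm_segAvg_le (f : ℝ → E) (u w : ℝ) : ‖segAvg f u w‖ ≤ segAvg (fun y => ‖f y‖) u w :=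
  intervalIntegral.norm_integral_le_integral_norm zero_le_one

lemma segAvg_nonneg {f : ℝ → ℝ} (hf : ∀ y, 0 ≤ f y) (u w : ℝ) : 0 ≤ segAvg f u w :=
  intervalIntegral.integral_nonneg zero_le_one fun _ _ => hf _

lemma segAvg_mono {f g : ℝ → ℝ} (hf : Continuous f) (hg : Continuous g) (hfg : ∀ y, f y ≤ g y)
    (u w : ℝ) : segAvg f u w ≤ segAvg g u w :=
  intervalIntegral.integral_mono_on zero_le_one (intervalIntegrable_segment hf u w)
    (intervalIntegrable_segment hg u w) fun _ _ => hfg _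

lemma segAvg_le_of_le {f : ℝ → ℝ} {a : ℝ} (hf : Continuous f) (hfa : ∀ y, f y ≤ a) (u w : ℝ) :
    segAvg f u w ≤ a :=
  (segAvg_mono hf continuous_const hfa u w).trans_eq (segAvg_const a u w)

lemma le_segAvg_of_le {f : ℝ → ℝ} {a : ℝ} (hf : Continuous f) (haf : ∀ y, a ≤ f y) (u w : ℝ) :
    a ≤ segAvg f u w :=
  (segAvg_const a u w).symm.trans_le (segAvg_mono continuous_const hf haf u w)

lemma sq_segAvg_le {f : ℝ → ℝ} (hf : Continuous f) (u w : ℝ) :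
    segAvg f u w ^ 2 ≤ segAvg (fun y => f y ^ 2) u w := by
  have : IsProbabilityMeasure (volume.restrict (Ioc (0 : ℝ) 1)) := ⟨by simp⟩
  have jensen := (Even.convexOn_pow (𝕜 := ℝ) even_two).map_integral_le
    (μ := volume.restrict (Ioc (0 : ℝ) 1)) (f := fun x => f (u + w * x))
    (continuous_pow 2).continuousOn isClosed_univ (by simp)
    (intervalIntegrable_segment hf u w).1 (intervalIntegrable_segment (hf.pow 2) u w).1
  simpa only [segAvg, intervalIntegral.integral_of_le zero_le_one] using jensen

lemma periodic_segAvg {c : ℝ} (hf : Function.Periodic f c) (w : ℝ) :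
    Function.Periodic (fun u => segAvg f u w) c := fun u => by
  simp only [segAvg, add_right_comm u c, hf (u + w * _)]

lemma integral_comp_add_of_periodic (hf : Function.Periodic f 1) (d : ℝ) :
    ∫ u in (0 : ℝ)..1, f (u + d) = ∫ u in (0 : ℝ)..1, f u := by
  rw [intervalIntegral.integral_comp_add_right, add_comm 1 d, zero_add]
  simpa only [zero_add] using hf.intervalIntegral_add_eq d 0

lemma integral_segAvg_of_periodic [CompleteSpace E] (hf : Continuous f)
    (hp : Function.Periodic f 1) (w : ℝ) :
    ∫ u in (0 : ℝ)..1, segAvg f u w = ∫ u in (0 : ℝ)..1, f u := by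
  have hcont : Continuous fun p : ℝ × ℝ => f (p.1 + w * p.2) := by fun_prop
  have hint : IntegrableOn (fun p : ℝ × ℝ => f (p.1 + w * p.2)) (uIoc 0 1 ×ˢ uIoc 0 1) :=
    (hcont.continuousOn.integrableOn_compact (isCompact_uIcc.prod isCompact_uIcc)).mono_set
      (prod_mono uIoc_subset_uIcc uIoc_subset_uIcc)
  calc ∫ u in (0 : ℝ)..1, segAvg f u w
      = ∫ x in (0 : ℝ)..1, ∫ u in (0 : ℝ)..1, f (u + w * x) :=
        intervalIntegral_intervalIntegral_swap hint
    _ = ∫ _ in (0 : ℝ)..1, ∫ u in (0 : ℝ)..1, f u :=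
        intervalIntegral.integral_congr fun x _ => integral_comp_add_of_periodic hp (w * x)
    _ = ∫ u in (0 : ℝ)..1, f u := by simp

lemma BddLipOn.intervalIntegral {X : Type*} [PseudoMetricSpace X] {T : Set X} {a b : ℝ} {k : ℝ → ℝ}
    {F : X → ℝ → E} (hab : a ≤ b) (hF : ∀ x ∈ Icc a b, BddLipOn (k x) T (F · x))
    (hk : IntervalIntegrable k volume a b) (hFi : ∀ t ∈ T, IntervalIntegrable (F t) volume a b) :
    BddLipOn (∫ x in a..b, k x) T (fun t => ∫ x in a..b, F t x) where
  norm_le t ht := (intervalIntegral.norm_integral_le_integral_norm hab).trans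
    (intervalIntegral.integral_mono_on hab (hFi t ht).norm hk fun x hx => (hF x hx).norm_le ht)
  norm_sub_le t s ht hs := by
    rw [← intervalIntegral.integral_sub (hFi t ht) (hFi s hs),
      ← intervalIntegral.integral_mul_const]
    exact (intervalIntegral.norm_integral_le_integral_norm hab).trans
      (intervalIntegral.integral_mono_on hab ((hFi t ht).sub (hFi s hs)).norm (hk.mul_const _)
        fun x hx => (hF x hx).norm_sub_le ht hs)

lemma BddLipOn.segAvg {X : Type*} [PseudoMetricSpace X] {T : Set X} {k : ℝ → ℝ} {F : X → ℝ → E}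
    (hF : ∀ y, BddLipOn (k y) T (F · y)) (hk : Continuous k) (hFc : ∀ t ∈ T, Continuous (F t))
    (u w : ℝ) : BddLipOn (segAvg k u w) T (fun t => segAvg (F t) u w) :=
  BddLipOn.intervalIntegral zero_le_one (fun _ _ => hF _) (intervalIntegrable_segment hk u w)
    fun t ht => intervalIntegrable_segment (hFc t ht) u w

end SegAvg

section InnerSegAvg

variable {E : Type*} [NormedAddCommGroup E] [InnerProductSpace ℝ E] {f g : ℝ → E}

lemma segAvg_inner_const [CompleteSpace E] (hf : Continuous f) (e : E) (u w : ℝ) :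
    segAvg (fun y => ⟪f y, e⟫) u w = ⟪segAvg f u w, e⟫ := by
  simp only [real_inner_comm e]
  exact (innerSL ℝ e).intervalIntegral_comp_comm (intervalIntegrable_segment hf u w)

lemma segAvg_norm_sub_norm_segAvg_mul [CompleteSpace E] (hf : Continuous f) (u w : ℝ) :
    (segAvg (fun y => ‖f y‖) u w - ‖segAvg f u w‖) * ‖f u‖ =
      segAvg (fun y => ‖f y‖ * ‖f u‖ - ⟪f y, f u⟫) u w
        - (‖segAvg f u w‖ * ‖f u‖ - ⟪segAvg f u w, f u⟫) := by
  have hnorm : segAvg (fun y => ‖f y‖ * ‖f u‖) u w = segAvg (fun y => ‖f y‖) u w * ‖f u‖ := by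
    simp only [mul_comm _ ‖f u‖, ← smul_eq_mul, segAvg_smul]
  rw [segAvg_sub (by fun_prop) (by fun_prop), segAvg_inner_const hf, hnorm]
  ring

lemma hasDerivAt_norm_add_smul {a : E} (ha : a ≠ 0) (b : E) :
    HasDerivAt (fun t : ℝ => ‖a + t • b‖) (⟪a, b⟫ / ‖a‖) 0 := by
  have hline : HasDerivAt (fun t : ℝ => a + t • b) b 0 := by
    simpa using ((hasDerivAt_id (0 : ℝ)).smul_const b).const_add a
  have hsqrt := hline.norm_sq.sqrt (by simpa using ha)
  simp only [zero_smul, add_zero, Real.sqrt_sq (norm_nonneg _)] at hsqrt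
  convert hsqrt using 1
  field_simp

lemma hasDerivAt_segAvg_norm_add_smul (hf : Continuous f) (hg : Continuous g)
    (hf0 : ∀ y, f y ≠ 0) (u w : ℝ) :
    HasDerivAt (fun t : ℝ => segAvg (fun y => ‖f y + t • g y‖) u w)
      (segAvg (fun y => ⟪f y, g y⟫ / ‖f y‖) u w) 0 := by
  have hF : ∀ t : ℝ, Continuous fun y => ‖f y + t • g y‖ := fun t => by fun_prop
  have hF' : Continuous fun y => ⟪f y, g y⟫ / ‖f y‖ :=
    (hf.inner hg).div hf.norm fun y => norm_ne_zero_iff.2 (hf0 y)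
  refine (intervalIntegral.hasDerivAt_integral_of_dominated_loc_of_lip
    (bound := fun x => ‖g (u + w * x)‖) univ_mem
    (Eventually.of_forall fun t =>
      (intervalIntegrable_segment (hF t) u w).def'.aestronglyMeasurable)
    (intervalIntegrable_segment (hF 0) u w)
    (intervalIntegrable_segment hF' u w).def'.aestronglyMeasurable
    (Eventually.of_forall fun x _ => LipschitzOnWith.of_dist_le_mul fun t _ s _ => ?_)
    (intervalIntegrable_segment hg.norm u w)
    (Eventually.of_forall fun x _ => hasDerivAt_norm_add_smul (hf0 _) _)).2
  rw [Real.dist_eq, Real.coe_nnabs, abs_norm, Real.dist_eq]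
  refine (abs_norm_sub_norm_le _ _).trans_eq ?_
  rw [add_sub_add_left_eq_sub, ← sub_smul, norm_smul, Real.norm_eq_abs, mul_comm]

end InnerSegAvg

section RpowDifference

variable {X : Type*} [PseudoMetricSpace X] {α c : ℝ}

lemma rpow_neg_sub_rpow_neg {r s : ℝ} (α : ℝ) (hr : 0 < r) (hs : 0 < s) :
    s ^ (-α) - r ^ (-α) = α * ((r - s) * segAvg (fun x => x ^ (-(α + 1))) s (r - s)) := by
  rcases eq_or_ne α 0 with rfl | hα
  · simp
  have hpos : (0 : ℝ) ∉ uIcc s r := fun h =>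
    (lt_min hs hr).not_ge (by simpa only [uIcc, mem_Icc] using h.1)
  rw [← smul_eq_mul (r - s), smul_segAvg, add_sub_cancel,
    integral_rpow (Or.inr ⟨by simpa [sub_eq_add_neg] using hα, hpos⟩),
    show -(α + 1) + 1 = -α by ring]
  field_simp
  ring

lemma BddLipOn.exists_segAvg_rpow_neg (hc : 0 < c) (hα : 0 ≤ α) (B : ℝ) (T : Set X) :
    ∃ C : ℝ, ∀ ⦃r s : X → ℝ⦄, BddLipOn B T r → BddLipOn B T s → (∀ t ∈ T, c ≤ r t) →
      (∀ t ∈ T, c ≤ s t) →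
      BddLipOn C T (fun t => _root_.segAvg (fun x => x ^ (-α)) (s t) (r t - s t)) := by
  refine ⟨c ^ (-α) + α * c ^ (-α - 1) * (3 * |B|), fun r s hr hs hcr hcs => ?_⟩
  have hlow : ∀ θ ∈ Icc (0 : ℝ) 1, ∀ t ∈ T, c ≤ s t + (r t - s t) * θ := fun θ hθ t ht => by
    nlinarith [mul_nonneg (sub_nonneg.2 (hcs t ht)) (sub_nonneg.2 hθ.2),
      mul_nonneg (sub_nonneg.2 (hcr t ht)) hθ.1]
  have hpoint : ∀ θ ∈ Icc (0 : ℝ) 1, BddLipOn (c ^ (-α) + α * c ^ (-α - 1) * (3 * |B|)) T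
      (fun t => (s t + (r t - s t) * θ) ^ (-α)) := fun θ hθ => by
    have hline := (hs.add ((hr.sub hs).const_mul θ)).mono (K₂ := 3 * |B|) (by
      rw [abs_of_nonneg hθ.1]
      nlinarith [hθ.1, hθ.2, le_abs_self B, abs_nonneg B])
    simp only [mul_comm θ] at hline
    exact hline.rpow_neg hc hα (hlow θ hθ)
  refine (BddLipOn.intervalIntegral zero_le_one hpoint intervalIntegrable_const
    fun t ht => ContinuousOn.intervalIntegrable ?_).mono (by simp)
  rw [uIcc_of_le zero_le_one]
  exact ContinuousOn.rpow_const (by fun_prop) fun θ hθ => Or.inl (hc.trans_le (hlow θ hθ t ht)).ne'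

lemma BddLipOn.exists_rpow_neg_sub_rpow_neg (hc : 0 < c) (hα : 0 ≤ α) (B : ℝ) (T : Set X) :
    ∃ C : ℝ, ∀ ⦃D : ℝ⦄ ⦃r s z : X → ℝ⦄, BddLipOn B T r → BddLipOn B T s → (∀ t ∈ T, c ≤ r t) →
      (∀ t ∈ T, c ≤ s t) → BddLipOn D T (fun t => (r t - s t) * z t) →
      BddLipOn (C * D) T (fun t => (s t ^ (-α) - r t ^ (-α)) * z t) := by
  obtain ⟨C, hC⟩ := BddLipOn.exists_segAvg_rpow_neg hc (by positivity : 0 ≤ α + 1) B T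
  refine ⟨|α| * (2 * C), fun D r s z hr hs hcr hcs hz => ?_⟩
  refine (((hz.mul (hC hr hs hcr hcs)).const_mul α).mono (le_of_eq (by ring))).congr fun t ht => ?_
  change (s t ^ (-α) - r t ^ (-α)) * z t = α * ((r t - s t) * z t * _)
  rw [rpow_neg_sub_rpow_neg α (hc.trans_le (hcr t ht)) (hc.trans_le (hcs t ht))]
  ring

end RpowDifference

/-- A family `f t`, `t ∈ T`, of vector fields along `ℝ` that is uniformly bounded and uniformly
Lipschitz in the parameter, with a uniform lower bound for the means over short segments. If `f t`
is the derivative of a curve, such a mean is a difference quotient of the curve, and the lower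
bound is a uniform bi-Lipschitz estimate for these curves. -/
structure RegularFamily {X E : Type*} [PseudoMetricSpace X] [NormedAddCommGroup E]
    [NormedSpace ℝ E] (c B : ℝ) (T : Set X) (f : X → ℝ → E) : Prop where
  continuous : ∀ ⦃t⦄, t ∈ T → Continuous (f t)
  bddLipOn : ∀ u, BddLipOn B T (f · u)
  le_norm_segAvg : ∀ ⦃t⦄, t ∈ T → ∀ u ⦃w : ℝ⦄, |w| ≤ 1 / 2 → c ≤ ‖segAvg (f t) u w‖

namespace RegularFamily

variable {X E : Type*} [PseudoMetricSpace X] [NormedAddCommGroup E] {c B : ℝ} {T : Set X}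
  {f : X → ℝ → E} {u w : ℝ}

section NormedSpace

variable [NormedSpace ℝ E]

lemma le_norm [CompleteSpace E] (hf : RegularFamily c B T f) {t : X} (ht : t ∈ T) (u : ℝ) :
    c ≤ ‖f t u‖ := by
  simpa only [segAvg_zero_right] using hf.le_norm_segAvg ht u (w := 0) (by norm_num)

lemma le_segAvg_norm [CompleteSpace E] (hf : RegularFamily c B T f) {t : X} (ht : t ∈ T)
    (u w : ℝ) : c ≤ segAvg (fun y => ‖f t y‖) u w :=
  le_segAvg_of_le (hf.continuous ht).norm (hf.le_norm ht) u w

lemma bddLipOn_segAvg (hf : RegularFamily c B T f) (u w : ℝ) :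
    BddLipOn B T (fun t => segAvg (f t) u w) := by
  simpa only [segAvg_const] using
    BddLipOn.segAvg hf.bddLipOn continuous_const (fun t ht => hf.continuous ht) u w

lemma bddLipOn_segAvg_norm (hf : RegularFamily c B T f) (u w : ℝ) :
    BddLipOn B T (fun t => segAvg (fun y => ‖f t y‖) u w) := by
  simpa only [segAvg_const] using BddLipOn.segAvg (fun y => (hf.bddLipOn y).norm) continuous_const
    (fun t ht => (hf.continuous ht).norm) u w

lemma exists_add_smul {f g : ℝ → E} {F H : ℝ} (hf : Continuous f) (hg : Continuous g) (hc : 0 < c)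
    (hF : ∀ u, ‖f u‖ ≤ F) (hH : ∀ u, ‖g u‖ ≤ H)
    (hfc : ∀ u w, |w| ≤ 1 / 2 → c ≤ ‖segAvg f u w‖) :
    ∃ δ ∈ Ioc (0 : ℝ) 1,
      RegularFamily (c / 2) (F + H) (Metric.ball (0 : ℝ) δ)
        fun t u => f u + t • g u := by
  have hH₀ : 0 ≤ H := (norm_nonneg _).trans (hH 0)
  have hδ : 0 < c / (2 * (H + 1)) := by positivity
  refine ⟨min 1 (c / (2 * (H + 1))), ⟨lt_min one_pos hδ, min_le_left _ _⟩, fun t _ => by fun_prop,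
    fun u => BddLipOn.affine (hF u) (hH u) fun t ht => ?_, fun t ht u w hw => ?_⟩
  all_goals rw [mem_ball_zero_iff, Real.norm_eq_abs, lt_min_iff] at ht
  · exact ht.1.le
  have hperturb : ‖t • segAvg g u w‖ ≤ c / 2 := by
    have hgw : ‖segAvg g u w‖ ≤ H :=
      (norm_segAvg_le g u w).trans (segAvg_le_of_le hg.norm hH u w)
    calc ‖t • segAvg g u w‖ = |t| * ‖segAvg g u w‖ := by rw [norm_smul, Real.norm_eq_abs]
      _ ≤ c / (2 * (H + 1)) * (H + 1) := by
        gcongr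
        exacts [ht.2.le, by linarith]
      _ = c / 2 := by field_simp
  rw [segAvg_add hf (by fun_prop), segAvg_smul]
  linarith [hfc u w hw, norm_le_add_norm_add (segAvg f u w) (t • segAvg g u w)]

end NormedSpace

variable [InnerProductSpace ℝ E] [CompleteSpace E]

lemma exists_bddLipOn_arc_sub_chord (hf : RegularFamily c B T f) (hc : 0 < c) :
    ∃ C : ℝ, ∀ ⦃ω : ℝ → ℝ⦄ ⦃u w : ℝ⦄, Continuous ω →
      (∀ y, BddLipOn (ω y) T (fun t => f t y - f t u)) → |w| ≤ 1 / 2 →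
      BddLipOn (C * segAvg (fun y => ω y ^ 2) u w) T
        (fun t => (segAvg (fun y => ‖f t y‖) u w - ‖segAvg (f t) u w‖) * ‖f t u‖) := by
  obtain ⟨C, hC₀, hC⟩ := BddLipOn.exists_cauchySchwarz_defect T E hc B
  refine ⟨2 * C, fun ω u w hω hfω hw => ?_⟩
  have hpointwise : ∀ y, BddLipOn (C * ω y ^ 2) T
      (fun t => ‖f t y‖ * ‖f t u‖ - ⟪f t y, f t u⟫) := fun y =>
    hC (hf.bddLipOn y) (hf.bddLipOn u) (fun t ht => hf.le_norm ht y)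
      (fun t ht => hf.le_norm ht u) (hfω y)
  have hmean := BddLipOn.segAvg hpointwise (by fun_prop)
    (fun t ht => by have := hf.continuous ht; fun_prop) u w
  have hdiff : BddLipOn (segAvg ω u w) T (fun t => segAvg (f t) u w - f t u) := by
    refine (BddLipOn.segAvg hfω hω
      (fun t ht => (hf.continuous ht).sub continuous_const) u w).congr fun t ht => ?_
    change segAvg (f t) u w - f t u = segAvg (fun y => f t y - f t u) u w
    rw [segAvg_sub (hf.continuous ht) continuous_const, segAvg_const]
  have hchord := hC (hf.bddLipOn_segAvg u w) (hf.bddLipOn u)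
    (fun t ht => hf.le_norm_segAvg ht u hw) (fun t ht => hf.le_norm ht u) hdiff
  refine ((hmean.sub hchord).mono ?_).congr fun t ht =>
    segAvg_norm_sub_norm_segAvg_mul (hf.continuous ht) u w
  simp only [← smul_eq_mul C, segAvg_smul]
  simp only [smul_eq_mul]
  nlinarith [mul_le_mul_of_nonneg_left (sq_segAvg_le hω u w) hC₀]

lemma exists_bddLipOn_rpow_neg_sub (hf : RegularFamily c B T f) (hc : 0 < c) {α : ℝ} (hα : 0 ≤ α) :
    ∃ C : ℝ, ∀ ⦃ω : ℝ → ℝ⦄ ⦃u w : ℝ⦄, Continuous ω →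
      (∀ y, BddLipOn (ω y) T (fun t => f t y - f t u)) → |w| ≤ 1 / 2 →
      BddLipOn (C * segAvg (fun y => ω y ^ 2) u w) T
        (fun t => (‖segAvg (f t) u w‖ ^ (-α) - segAvg (fun y => ‖f t y‖) u w ^ (-α))
          * ‖f t (u + w)‖ * ‖f t u‖) := by
  obtain ⟨C₁, hC₁⟩ := hf.exists_bddLipOn_arc_sub_chord hc
  obtain ⟨C₂, hC₂⟩ := BddLipOn.exists_rpow_neg_sub_rpow_neg hc hα B T
  refine ⟨2 * (C₂ * C₁ * B), fun ω u w hω hfω hw => ?_⟩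
  have hdiff := hC₂ (hf.bddLipOn_segAvg_norm u w) (hf.bddLipOn_segAvg u w).norm
    (fun t ht => hf.le_segAvg_norm ht u w) (fun t ht => hf.le_norm_segAvg ht u hw)
    (hC₁ hω hfω hw)
  exact ((hdiff.mul (hf.bddLipOn (u + w)).norm).mono (le_of_eq (by ring))).congr
    fun t _ => mul_right_comm _ _ _

end RegularFamily

lemma exists_norm_le_of_periodic {E : Type*} [SeminormedAddCommGroup E] {g : ℝ → E} {c : ℝ}
    (hg : Continuous g) (hp : Function.Periodic g c) (hc : c ≠ 0) : ∃ H : ℝ, ∀ u, ‖g u‖ ≤ H := by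
  obtain ⟨H, hH⟩ := (hp.compact_of_continuous hc hg).isBounded.exists_norm_le
  exact ⟨H, fun u => hH _ ⟨u, rfl⟩⟩

section PeriodicCurve

variable {E : Type*} [NormedAddCommGroup E] [NormedSpace ℝ E] {γ h : ℝ → E}

lemma chord_eq_smul_segAvg_deriv [CompleteSpace E] (hγ : ContDiff ℝ 1 γ) (u w : ℝ) :
    γ (u + w) - γ u = w • segAvg (deriv γ) u w := by
  rw [smul_segAvg, intervalIntegral.integral_deriv_eq_sub
    (fun _ _ => hγ.differentiable one_ne_zero _)
    ((hγ.continuous_deriv le_rfl).intervalIntegrable _ _)]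

lemma norm_chord_eq [CompleteSpace E] (hγ : ContDiff ℝ 1 γ) (u w : ℝ) :
    ‖γ (u + w) - γ u‖ = |w| * ‖segAvg (deriv γ) u w‖ := by
  rw [chord_eq_smul_segAvg_deriv hγ, norm_smul, Real.norm_eq_abs]

lemma deriv_add_smul (hγ : ContDiff ℝ 1 γ) (hh : ContDiff ℝ 1 h) (t u : ℝ) :
    deriv (γ + t • h) u = deriv γ u + t • deriv h u :=
  (((hγ.differentiable one_ne_zero) u).hasDerivAt.add
    (((hh.differentiable one_ne_zero) u).hasDerivAt.const_smul t)).deriv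

lemma periodic_deriv {c : ℝ} (hp : Function.Periodic γ c) : Function.Periodic (deriv γ) c :=
  fun u => by rw [← deriv_comp_add_const, funext hp]

end PeriodicCurve

section ArcLength

variable {γ : ℝ → Rn n}

lemma arcLen_eq_abs_mul_segAvg (γ : ℝ → Rn n) (u w : ℝ) :
    arcLen γ u w = |w| * segAvg (fun y => ‖deriv γ y‖) u w := by
  rw [arcLen, ← smul_segAvg, smul_eq_mul, abs_mul,
    abs_of_nonneg (segAvg_nonneg (fun _ => norm_nonneg _) u w)]

lemma curveLen_eq_segAvg (γ : ℝ → Rn n) : curveLen γ = segAvg (fun y => ‖deriv γ y‖) 0 1 :=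
  (segAvg_zero_one _).symm

lemma continuous_arcLen (hγ : ContDiff ℝ 1 γ) : Continuous fun p : ℝ × ℝ => arcLen γ p.1 p.2 := by
  simp only [arcLen_eq_abs_mul_segAvg]
  exact continuous_snd.abs.mul (continuous_segAvg (hγ.continuous_deriv le_rfl).norm)

lemma norm_chord_le_arcLen (hγ : ContDiff ℝ 1 γ) (u w : ℝ) : ‖γ (u + w) - γ u‖ ≤ arcLen γ u w := by
  rw [norm_chord_eq hγ, arcLen_eq_abs_mul_segAvg]
  gcongr
  exact norm_segAvg_le _ u w

lemma arcLen_symm (γ : ℝ → Rn n) (u w : ℝ) : arcLen γ (u + w) (-w) = arcLen γ u w := by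
  rw [arcLen, arcLen, add_neg_cancel_right, intervalIntegral.integral_symm, abs_neg]

lemma idist_symm (γ : ℝ → Rn n) (u w : ℝ) : idist γ (u + w) (-w) = idist γ u w := by
  rw [idist, idist, arcLen_symm]

lemma arcLen_add_arcLen_compl (hγ : ContDiff ℝ 1 γ) (hp : Function.Periodic γ 1) {u w : ℝ}
    (hw : w ∈ Icc (0 : ℝ) 1) : arcLen γ u w + arcLen γ (u + w) (1 - w) = curveLen γ := by
  have hspeed : Continuous fun y => ‖deriv γ y‖ := (hγ.continuous_deriv le_rfl).norm
  have hperiodic : Function.Periodic (fun y => ‖deriv γ y‖) 1 := (periodic_deriv hp).comp _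
  have hnonneg : ∀ a b : ℝ, a ≤ b → 0 ≤ ∫ y in a..b, ‖deriv γ y‖ := fun a b hab =>
    intervalIntegral.integral_nonneg hab fun _ _ => norm_nonneg _
  rw [arcLen, arcLen, abs_of_nonneg (hnonneg _ _ (by linarith [hw.1])),
    abs_of_nonneg (hnonneg _ _ (by linarith [hw.2])),
    intervalIntegral.integral_add_adjacent_intervals (hspeed.intervalIntegrable _ _)
      (hspeed.intervalIntegrable _ _), add_assoc, add_sub_cancel,
    hperiodic.intervalIntegral_add_eq u 0, zero_add, curveLen]

lemma norm_chord_le_idist (hγ : ContDiff ℝ 1 γ) (hp : Function.Periodic γ 1) {u w : ℝ}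
    (hw : |w| ≤ 1) : ‖γ (u + w) - γ u‖ ≤ idist γ u w := by
  wlog hw₀ : 0 ≤ w generalizing u w
  · have := this (u := u + w) (w := -w) (by rwa [abs_neg]) (by linarith)
    rwa [idist_symm, add_neg_cancel_right, norm_sub_rev] at this
  refine le_min (norm_chord_le_arcLen hγ u w) ?_
  have hcompl := norm_chord_le_arcLen hγ (u + w) (1 - w)
  rw [add_assoc, add_sub_cancel, hp u, norm_sub_rev] at hcompl
  linarith [arcLen_add_arcLen_compl hγ hp (u := u) ⟨hw₀, (le_abs_self w).trans hw⟩]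

lemma idist_eq_arcLen {u w : ℝ} (h : 2 * arcLen γ u w ≤ curveLen γ) :
    idist γ u w = arcLen γ u w :=
  min_eq_left (by linarith)

end ArcLength

section Injective

variable {γ : ℝ → Rn n}

lemma PerInjective.apply_add_ne (hinj : PerInjective γ) (u : ℝ) {w : ℝ} (hw : |w| < 1)
    (hw₀ : w ≠ 0) : γ (u + w) ≠ γ u := fun h => by
  obtain ⟨k, hk⟩ := hinj u (u + w) h.symm
  obtain rfl : w = k := by linarith
  exact hw₀ (by exact_mod_cast Int.abs_lt_one_iff.1 (by exact_mod_cast hw))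

lemma perInjective_of_segAvg_deriv_ne_zero (hγ : ContDiff ℝ 1 γ) (hp : Function.Periodic γ 1)
    (h : ∀ u w, |w| ≤ 1 / 2 → segAvg (deriv γ) u w ≠ 0) : PerInjective γ := fun u v huv => by
  refine ⟨round (v - u), ?_⟩
  set w := v - u - round (v - u)
  have hchord : γ (u + w) - γ u = 0 := by
    rw [huv, ← hp.sub_int_mul_eq (round (v - u)) (x := v), sub_eq_zero]
    congr 1
    ring
  rw [chord_eq_smul_segAvg_deriv hγ, smul_eq_zero_iff_left (h u w (abs_sub_round _))] at hchord
  linarith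

lemma PerInjective.segAvg_deriv_ne_zero (hinj : PerInjective γ) (hγ : ContDiff ℝ 1 γ)
    (hreg : RegularCurve γ) (u : ℝ) {w : ℝ} (hw : |w| < 1) : segAvg (deriv γ) u w ≠ 0 := by
  rcases eq_or_ne w 0 with rfl | hw₀
  · simpa only [segAvg_zero_right] using hreg u
  · have hne := sub_ne_zero.2 (hinj.apply_add_ne u hw hw₀)
    rw [chord_eq_smul_segAvg_deriv hγ] at hne
    exact right_ne_zero_of_smul hne

lemma exists_le_norm_segAvg_deriv (hγ : ContDiff ℝ 1 γ) (hp : Function.Periodic γ 1)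
    (hinj : PerInjective γ) (hreg : RegularCurve γ) :
    ∃ c : ℝ, 0 < c ∧ ∀ u w : ℝ, |w| ≤ 1 / 2 → c ≤ ‖segAvg (deriv γ) u w‖ := by
  have hcont := (continuous_segAvg (hγ.continuous_deriv le_rfl)).norm
  obtain ⟨p, hp_mem, hmin⟩ := ((isCompact_Icc (a := (0 : ℝ)) (b := 1)).prod
    (isCompact_Icc (a := (-(1 / 2) : ℝ)) (b := 1 / 2))).exists_isMinOn
      ⟨(0, 0), by norm_num⟩ hcont.continuousOn
  have hp_abs : |p.2| < 1 := (abs_le.2 hp_mem.2).trans_lt one_half_lt_one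
  refine ⟨_, norm_pos_iff.2 (hinj.segAvg_deriv_ne_zero hγ hreg p.1 hp_abs), fun u w hw => ?_⟩
  have hfract : segAvg (deriv γ) (Int.fract u) w = segAvg (deriv γ) u w :=
    by simpa only [mul_one, Int.self_sub_floor] using
      (periodic_segAvg (periodic_deriv hp) w).sub_int_mul_eq (x := u) ⌊u⌋
  have hle := hmin (mk_mem_prod ⟨Int.fract_nonneg u, (Int.fract_lt_one u).le⟩ (abs_le.1 hw))
  simpa only [mem_ofPred_eq, hfract] using hle

end Injective

section EnergyIntegrand

variable {γ : ℝ → Rn n} {α : ℝ}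

lemma measurable_ohIntegrand (hγ : ContDiff ℝ 1 γ) (α : ℝ) :
    Measurable (fun p : ℝ × ℝ => ohIntegrand α γ p.1 p.2) := by
  have hγ₀ : Continuous γ := hγ.continuous
  have hidist : Continuous fun p : ℝ × ℝ => idist γ p.1 p.2 :=
    (continuous_arcLen hγ).min (continuous_const.sub (continuous_arcLen hγ))
  have hchord : Continuous fun p : ℝ × ℝ => ‖γ (p.1 + p.2) - γ p.1‖ := by fun_prop
  have hspeed : Continuous fun p : ℝ × ℝ => ‖deriv γ (p.1 + p.2)‖ := by fun_prop
  have hspeed₀ : Continuous fun p : ℝ × ℝ => ‖deriv γ p.1‖ := by fun_prop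
  exact (((hchord.measurable.pow_const α).const_div 1).sub
    ((hidist.measurable.pow_const α).const_div 1)).mul hspeed.measurable |>.mul hspeed₀.measurable

lemma ohIntegrand_nonneg (hγ : ContDiff ℝ 1 γ) (hp : Function.Periodic γ 1)
    (hinj : PerInjective γ) (hα : 0 ≤ α) {u w : ℝ} (hw : |w| < 1) (hw₀ : w ≠ 0) :
    0 ≤ ohIntegrand α γ u w := by
  have hchord : 0 < ‖γ (u + w) - γ u‖ :=
    norm_pos_iff.2 (sub_ne_zero.2 (hinj.apply_add_ne u hw hw₀))
  refine mul_nonneg (mul_nonneg (sub_nonneg.2 ?_) (norm_nonneg _)) (norm_nonneg _)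
  exact one_div_le_one_div_of_le (Real.rpow_pos_of_pos hchord α)
    (Real.rpow_le_rpow hchord.le (norm_chord_le_idist hγ hp hw.le) hα)

lemma ohIntegrand_eq_of_two_mul_arcLen_le (hγ : ContDiff ℝ 1 γ) {u w : ℝ}
    (h : 2 * arcLen γ u w ≤ curveLen γ) :
    ohIntegrand α γ u w = |w| ^ (-α) * ((‖segAvg (deriv γ) u w‖ ^ (-α)
      - segAvg (fun y => ‖deriv γ y‖) u w ^ (-α)) * ‖deriv γ (u + w)‖ * ‖deriv γ u‖) := by
  have hspeed : 0 ≤ segAvg (fun y => ‖deriv γ y‖) u w := segAvg_nonneg (fun _ => norm_nonneg _) u w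
  rw [ohIntegrand, idist_eq_arcLen h, norm_chord_eq hγ, arcLen_eq_abs_mul_segAvg, one_div, one_div,
    ← Real.rpow_neg (by positivity), ← Real.rpow_neg (by positivity),
    Real.mul_rpow (by positivity) (by positivity), Real.mul_rpow (by positivity) hspeed]
  ring

/-- The measure of the fundamental domain `(0,1] × (-1/2,1/2)`, over which `E^α` is integrated. -/
def torusMeasure : Measure (ℝ × ℝ) :=
  (volume.restrict (Ioc (0 : ℝ) 1)).prod (volume.restrict (Ioo (-(1 : ℝ) / 2) (1 / 2)))

instance : IsFiniteMeasure torusMeasure := by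
  unfold torusMeasure
  infer_instance

lemma ae_torusMeasure : ∀ᵐ p ∂torusMeasure, p.2 ≠ 0 ∧ |p.2| < 1 / 2 := by
  refine Measure.quasiMeasurePreserving_snd.ae (p := fun w => w ≠ 0 ∧ |w| < 1 / 2) ?_
  filter_upwards [ae_restrict_mem measurableSet_Ioo,
    ae_restrict_of_ae (Measure.ae_ne volume (0 : ℝ))] with w hw hw₀
  exact ⟨hw₀, abs_lt.2 ⟨by linarith [hw.1], hw.2⟩⟩

lemma oharaER_eq_integral (hγ : ContDiff ℝ 1 γ) (hp : Function.Periodic γ 1)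
    (hinj : PerInjective γ) (hα : 0 ≤ α) :
    oharaER α γ = ∫ p, ohIntegrand α γ p.1 p.2 ∂torusMeasure := by
  have hmeas := measurable_ohIntegrand hγ α
  have hnonneg : 0 ≤ᵐ[torusMeasure] fun p => ohIntegrand α γ p.1 p.2 := by
    filter_upwards [ae_torusMeasure] with p hpw
    exact ohIntegrand_nonneg hγ hp hinj hα (hpw.2.trans one_half_lt_one) hpw.1
  rw [integral_eq_lintegral_of_nonneg_ae hnonneg hmeas.aestronglyMeasurable, torusMeasure,
    lintegral_prod _ hmeas.ennreal_ofReal.aemeasurable]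
  rfl

end EnergyIntegrand

section RegularFamilyOfCurves

variable {X : Type*} [PseudoMetricSpace X] {c B α : ℝ} {T : Set X} {η : X → ℝ → Rn n}

lemma RegularFamily.exists_bddLipOn_ohIntegrand_near
    (hη' : RegularFamily c B T fun t => deriv (η t)) (hη : ∀ t ∈ T, ContDiff ℝ 1 (η t))
    (hc : 0 < c) (hα : 0 ≤ α) :
    ∃ C : ℝ, ∀ ⦃ω : ℝ → ℝ⦄ ⦃u w : ℝ⦄, Continuous ω →
      (∀ y, BddLipOn (ω y) T (fun t => deriv (η t) y - deriv (η t) u)) → |w| ≤ 1 / 2 →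
      2 * (|w| * B) ≤ c →
      BddLipOn (C * (segAvg (fun y => ω y ^ 2) u w / |w| ^ α)) T
        (fun t => ohIntegrand α (η t) u w) := by
  obtain ⟨C, hC⟩ := hη'.exists_bddLipOn_rpow_neg_sub hc hα
  refine ⟨C, fun ω u w hω hηω hw hwB => ?_⟩
  refine (((hC hω hηω hw).const_mul (|w| ^ (-α))).mono (le_of_eq ?_)).congr fun t ht =>
    ohIntegrand_eq_of_two_mul_arcLen_le (hη t ht) ?_
  · rw [abs_of_nonneg (by positivity), Real.rpow_neg (abs_nonneg _)]
    ring
  · rw [arcLen_eq_abs_mul_segAvg, curveLen_eq_segAvg]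
    calc 2 * (|w| * segAvg (fun y => ‖deriv (η t) y‖) u w) ≤ 2 * (|w| * B) := by
          gcongr
          exact segAvg_le_of_le (hη'.continuous ht).norm
            (fun y => (hη'.bddLipOn y).norm_le ht) u w
      _ ≤ c := hwB
      _ ≤ segAvg (fun y => ‖deriv (η t) y‖) 0 1 := hη'.le_segAvg_norm ht 0 1

lemma abs_mul_le_abs_right {a b : ℝ} (ha : |a| ≤ 1) : |a| * b ≤ |b| :=
  (mul_le_mul_of_nonneg_left (le_abs_self b) (abs_nonneg a)).trans
    (mul_le_of_le_one_left (abs_nonneg b) ha)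

lemma RegularFamily.bddLipOn_chord (hη' : RegularFamily c B T fun t => deriv (η t))
    (hη : ∀ t ∈ T, ContDiff ℝ 1 (η t)) (u : ℝ) {w : ℝ} (hw : |w| ≤ 1) :
    BddLipOn |B| T (fun t => ‖η t (u + w) - η t u‖) := by
  refine (((hη'.bddLipOn_segAvg u w).norm.const_mul |w|).mono ?_).congr fun t ht =>
    norm_chord_eq (hη t ht) u w
  rw [abs_abs]
  exact abs_mul_le_abs_right hw

lemma RegularFamily.bddLipOn_idist (hη' : RegularFamily c B T fun t => deriv (η t)) (u : ℝ)
    {w : ℝ} (hw : |w| ≤ 1) : BddLipOn (2 * |B|) T (fun t => idist (η t) u w) := by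
  have harc : BddLipOn |B| T (fun t => arcLen (η t) u w) := by
    simp only [arcLen_eq_abs_mul_segAvg]
    refine ((hη'.bddLipOn_segAvg_norm u w).const_mul |w|).mono ?_
    rw [abs_abs]
    exact abs_mul_le_abs_right hw
  have hlen : BddLipOn |B| T (fun t => curveLen (η t)) := by
    simp only [curveLen_eq_segAvg]
    exact (hη'.bddLipOn_segAvg_norm 0 1).mono (le_abs_self B)
  exact (harc.mono (by linarith [abs_nonneg B])).min ((hlen.sub harc).mono (two_mul _).ge)

lemma RegularFamily.exists_bddLipOn_ohIntegrand_far
    (hη' : RegularFamily c B T fun t => deriv (η t)) (hη : ∀ t ∈ T, ContDiff ℝ 1 (η t))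
    (hp : ∀ t ∈ T, Function.Periodic (η t) 1) (hc : 0 < c) (hα : 0 ≤ α) {r : ℝ} (hr : 0 < r) :
    ∃ C : ℝ, ∀ ⦃u w : ℝ⦄, r ≤ |w| → |w| ≤ 1 / 2 →
      BddLipOn C T (fun t => ohIntegrand α (η t) u w) := by
  have hrc : 0 < r * c := mul_pos hr hc
  let L (K : ℝ) : ℝ := (r * c) ^ (-α) + α * (r * c) ^ (-α - 1) * K
  refine ⟨2 * (2 * ((L |B| + L (2 * |B|)) * B) * B), fun u w hrw hw => ?_⟩
  have hw₁ : |w| ≤ 1 := hw.trans one_half_lt_one.le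
  have hchord : ∀ t ∈ T, r * c ≤ ‖η t (u + w) - η t u‖ := fun t ht => by
    rw [norm_chord_eq (hη t ht)]
    exact mul_le_mul hrw (hη'.le_norm_segAvg ht u hw) hc.le (abs_nonneg w)
  have hidist : ∀ t ∈ T, r * c ≤ idist (η t) u w := fun t ht =>
    (hchord t ht).trans (norm_chord_le_idist (hη t ht) (hp t ht) hw₁)
  have hdiff := ((hη'.bddLipOn_chord hη u hw₁).rpow_neg hrc hα hchord).sub
    ((hη'.bddLipOn_idist u hw₁).rpow_neg hrc hα hidist)
  refine ((hdiff.mul (hη'.bddLipOn (u + w)).norm).mul (hη'.bddLipOn u).norm).congr fun t ht => ?_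
  simp only [ohIntegrand, one_div, Real.rpow_neg (norm_nonneg _),
    Real.rpow_neg (hrc.le.trans (hidist t ht))]

lemma RegularFamily.exists_bddLipOn_ohIntegrand
    (hη' : RegularFamily c B T fun t => deriv (η t)) (hη : ∀ t ∈ T, ContDiff ℝ 1 (η t))
    (hp : ∀ t ∈ T, Function.Periodic (η t) 1) (hc : 0 < c) (hα : 0 ≤ α) :
    ∃ C : ℝ, ∀ ⦃ω : ℝ → ℝ⦄ ⦃u w : ℝ⦄, Continuous ω →
      (∀ y, BddLipOn (ω y) T (fun t => deriv (η t) y - deriv (η t) u)) → |w| ≤ 1 / 2 →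
      BddLipOn (C * (1 + segAvg (fun y => ω y ^ 2) u w / |w| ^ α)) T
        (fun t => ohIntegrand α (η t) u w) := by
  obtain ⟨C₁, hC₁⟩ := hη'.exists_bddLipOn_ohIntegrand_near hη hc hα
  obtain ⟨C₂, hC₂⟩ := hη'.exists_bddLipOn_ohIntegrand_far hη hp hc hα
    (r := c / (2 * (|B| + 1))) (by positivity)
  refine ⟨|C₁| + |C₂|, fun ω u w hω hηω hw => ?_⟩
  have hosc : 0 ≤ segAvg (fun y => ω y ^ 2) u w / |w| ^ α :=
    div_nonneg (segAvg_nonneg (fun _ => sq_nonneg _) u w) (by positivity)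
  rcases le_total (c / (2 * (|B| + 1))) |w| with hrw | hrw
  · refine (hC₂ hrw hw).mono ?_
    nlinarith [le_abs_self C₂, abs_nonneg C₁, abs_nonneg C₂]
  · rw [le_div_iff₀ (by positivity)] at hrw
    refine (hC₁ hω hηω hw ?_).mono ?_
    · nlinarith [le_abs_self B, abs_nonneg w]
    · nlinarith [le_abs_self C₁, abs_nonneg C₁, abs_nonneg C₂]

lemma RegularFamily.perInjective (hη' : RegularFamily c B T fun t => deriv (η t)) (hc : 0 < c)
    {t : X} (ht : t ∈ T) (hη : ContDiff ℝ 1 (η t)) (hp : Function.Periodic (η t) 1) :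
    PerInjective (η t) :=
  perInjective_of_segAvg_deriv_ne_zero hη hp fun u _ hw =>
    norm_pos_iff.1 (hc.trans_le (hη'.le_norm_segAvg ht u hw))

end RegularFamilyOfCurves

lemma ofReal_mul_setLIntegral_comp_mul_right_le {f : ℝ → ℝ≥0∞} {s : Set ℝ} {x : ℝ}
    (hf : Measurable f) (hs : MeasurableSet s) (hx : 0 < x) (hsx : ∀ w ∈ s, w * x ∈ s) :
    ENNReal.ofReal x * ∫⁻ w in s, f (w * x) ≤ ∫⁻ w in s, f w := by
  calc ENNReal.ofReal x * ∫⁻ w in s, f (w * x)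
      ≤ ENNReal.ofReal x * ∫⁻ w in (· * x) ⁻¹' s, f (w * x) := by
        gcongr
        exact hsx
    _ = ENNReal.ofReal x * (ENNReal.ofReal x⁻¹ * ∫⁻ w in s, f w) := by
        rw [← setLIntegral_map hs hf (measurable_mul_const x), Real.map_volume_mul_right hx.ne',
          Measure.restrict_smul, lintegral_smul_measure, abs_of_pos (inv_pos.2 hx), smul_eq_mul]
    _ = ∫⁻ w in s, f w := by
        rw [← mul_assoc, ← ENNReal.ofReal_mul hx.le, mul_inv_cancel₀ hx.ne', ENNReal.ofReal_one,
          one_mul]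

section MeanSquareOscillation

variable {E : Type*} [NormedAddCommGroup E] {g : ℝ → E} {α : ℝ}

/-- The mean square oscillation of `g` about the value `g u`, over the segment from `u` to
`u + w`. -/
def sqOsc (g : ℝ → E) (u w : ℝ) : ℝ := segAvg (fun y => ‖g y - g u‖ ^ 2) u w

lemma sqOsc_nonneg (g : ℝ → E) (u w : ℝ) : 0 ≤ sqOsc g u w :=
  segAvg_nonneg (fun _ => sq_nonneg _) u w

lemma continuous_sqOsc (hg : Continuous g) : Continuous fun p : ℝ × ℝ => sqOsc g p.1 p.2 :=
  intervalIntegral.continuous_parametric_intervalIntegral_of_continuous' (by fun_prop) 0 1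

lemma measurable_sqOsc_div (hg : Continuous g) (α : ℝ) :
    Measurable fun p : ℝ × ℝ => sqOsc g p.1 p.2 / |p.2| ^ α :=
  (continuous_sqOsc hg).measurable.div (continuous_snd.abs.measurable.pow_const α)

lemma ofReal_sqOsc_div (hg : Continuous g) (α u w : ℝ) :
    ENNReal.ofReal (sqOsc g u w / |w| ^ α)
      = ∫⁻ x in Ioc (0 : ℝ) 1, ENNReal.ofReal (‖g (u + w * x) - g u‖ ^ 2 / |w| ^ α) := by
  have hcont : Continuous fun x => ‖g (u + w * x) - g u‖ ^ 2 / |w| ^ α := by fun_prop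
  rw [sqOsc, segAvg, ← intervalIntegral.integral_div, intervalIntegral.integral_of_le zero_le_one,
    ofReal_integral_eq_lintegral_ofReal (hcont.intervalIntegrable 0 1).1
      (Eventually.of_forall fun x => by positivity)]

lemma setLIntegral_sq_norm_sub_div_dilation_le (hg : Continuous g) (hα : 1 ≤ α) (u : ℝ) {x : ℝ}
    (hx : x ∈ Ioc (0 : ℝ) 1) :
    ∫⁻ w in Ioo (-(1 : ℝ) / 2) (1 / 2), ENNReal.ofReal (‖g (u + w * x) - g u‖ ^ 2 / |w| ^ α)
      ≤ ∫⁻ w in Ioo (-(1 : ℝ) / 2) (1 / 2), ENNReal.ofReal (‖g (u + w) - g u‖ ^ 2 / |w| ^ α) := by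
  have hmeas : Measurable fun w => ENNReal.ofReal (‖g (u + w) - g u‖ ^ 2 / |w| ^ α) := by
    have hcont : Continuous fun w => ‖g (u + w) - g u‖ ^ 2 := by fun_prop
    exact (hcont.measurable.div (continuous_abs.measurable.pow_const α)).ennreal_ofReal
  refine le_trans ?_ (ofReal_mul_setLIntegral_comp_mul_right_le hmeas measurableSet_Ioo hx.1
    fun w hw => ⟨by nlinarith [hx.1, hx.2, hw.1, hw.2], by nlinarith [hx.1, hx.2, hw.1, hw.2]⟩)
  rw [← lintegral_const_mul' _ _ ENNReal.ofReal_ne_top]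
  refine lintegral_mono fun w => ?_
  rw [← ENNReal.ofReal_mul hx.1.le]
  refine ENNReal.ofReal_le_ofReal ?_
  have hxα : 0 < x ^ α := Real.rpow_pos_of_pos hx.1 α
  calc ‖g (u + w * x) - g u‖ ^ 2 / |w| ^ α
      = x ^ α * (‖g (u + w * x) - g u‖ ^ 2 / |w * x| ^ α) := by
        rw [abs_mul, abs_of_pos hx.1, Real.mul_rpow (abs_nonneg _) hx.1.le, mul_comm (|w| ^ α),
          mul_div_assoc', mul_div_mul_left _ _ hxα.ne']
    _ ≤ x * (‖g (u + w * x) - g u‖ ^ 2 / |w * x| ^ α) := by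
        gcongr
        simpa only [Real.rpow_one] using Real.rpow_le_rpow_of_exponent_ge hx.1 hx.2 hα

lemma lintegral_sqOsc_div_le (hg : Continuous g) (hα : 1 ≤ α) :
    ∫⁻ p, ENNReal.ofReal (sqOsc g p.1 p.2 / |p.2| ^ α) ∂torusMeasure
      ≤ gagliardoSq ((α - 1) / 2) g := by
  have hexp : 1 + 2 * ((α - 1) / 2) = α := by ring
  rw [torusMeasure, lintegral_prod _ (measurable_sqOsc_div hg α).ennreal_ofReal.aemeasurable,
    gagliardoSq]
  refine lintegral_mono fun u => ?_
  have hcont : Continuous fun q : ℝ × ℝ => ‖g (u + q.1 * q.2) - g u‖ ^ 2 := by fun_prop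
  simp only [hexp, ofReal_sqOsc_div hg]
  rw [lintegral_lintegral_swap (hcont.measurable.div
    (continuous_fst.abs.measurable.pow_const α)).ennreal_ofReal.aemeasurable]
  refine (setLIntegral_mono_ae aemeasurable_const (Eventually.of_forall fun x hx =>
    setLIntegral_sq_norm_sub_div_dilation_le hg hα u hx)).trans_eq ?_
  simp

lemma integrable_sqOsc_div (hg : Continuous g) (hα : 1 ≤ α)
    (hG : gagliardoSq ((α - 1) / 2) g < ⊤) :
    Integrable (fun p : ℝ × ℝ => sqOsc g p.1 p.2 / |p.2| ^ α) torusMeasure := by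
  refine ⟨(measurable_sqOsc_div hg α).aestronglyMeasurable, ?_⟩
  have hnonneg (p : ℝ × ℝ) : 0 ≤ sqOsc g p.1 p.2 / |p.2| ^ α :=
    div_nonneg (sqOsc_nonneg g p.1 p.2) (by positivity)
  rw [hasFiniteIntegral_iff_ofReal (Eventually.of_forall hnonneg)]
  exact (lintegral_sqOsc_div_le hg hα).trans_lt hG

end MeanSquareOscillation

section LinearVariation

variable {γ h : ℝ → Rn n} {α c B δ : ℝ}

lemma contDiff_add_smul (hγ : ContDiff ℝ 1 γ) (hh : ContDiff ℝ 1 h) (t : ℝ) :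
    ContDiff ℝ 1 (γ + t • h) :=
  hγ.add (hh.const_smul t)

lemma periodic_add_smul (hγ : Function.Periodic γ c) (hh : Function.Periodic h c) (t : ℝ) :
    Function.Periodic (γ + t • h) c :=
  hγ.add (hh.smul t)

lemma exists_regularFamily_deriv_add_smul (hγ : ContDiff ℝ 1 γ) (hh : ContDiff ℝ 1 h)
    (hγp : Function.Periodic γ 1) (hhp : Function.Periodic h 1) (hinj : PerInjective γ)
    (hreg : RegularCurve γ) :
    ∃ c > 0, ∃ B, ∃ δ ∈ Ioc (0 : ℝ) 1,
      RegularFamily c B (Metric.ball (0 : ℝ) δ) fun t => deriv (γ + t • h) := by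
  have hγ' := hγ.continuous_deriv le_rfl
  have hh' := hh.continuous_deriv le_rfl
  obtain ⟨c, hc, hcγ⟩ := exists_le_norm_segAvg_deriv hγ hγp hinj hreg
  obtain ⟨F, hF⟩ := exists_norm_le_of_periodic hγ' (periodic_deriv hγp) one_ne_zero
  obtain ⟨H, hH⟩ := exists_norm_le_of_periodic hh' (periodic_deriv hhp) one_ne_zero
  obtain ⟨δ, hδ, hfam⟩ := RegularFamily.exists_add_smul hγ' hh' hc hF hH hcγ
  have hderiv : (fun t : ℝ => deriv (γ + t • h)) = fun t u => deriv γ u + t • deriv h u := by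
    ext1 t
    exact funext (deriv_add_smul hγ hh t)
  exact ⟨c / 2, half_pos hc, F + H, δ, hδ, hderiv ▸ hfam⟩

lemma segAvg_sq_add_le {a b : ℝ → ℝ} (ha : Continuous a) (hb : Continuous b) (u w : ℝ) :
    segAvg (fun y => (a y + b y) ^ 2) u w
      ≤ 2 * (segAvg (fun y => a y ^ 2) u w + segAvg (fun y => b y ^ 2) u w) := by
  rw [← segAvg_add (by fun_prop) (by fun_prop), ← smul_eq_mul, ← segAvg_smul]
  exact segAvg_mono (by fun_prop) (by fun_prop) (fun y => add_sq_le) u w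

lemma RegularFamily.exists_integrable_bddLipOn_ohIntegrand
    (hfam : RegularFamily c B (Metric.ball (0 : ℝ) δ) fun t => deriv (γ + t • h)) (hc : 0 < c)
    (hδ : δ ≤ 1) (hα : 1 ≤ α) (hγ : MemH1 ((α - 1) / 2) γ) (hh : MemH1 ((α - 1) / 2) h) :
    ∃ bound : ℝ × ℝ → ℝ, Integrable bound torusMeasure ∧ ∀ᵐ p ∂torusMeasure,
      BddLipOn (bound p) (Metric.ball (0 : ℝ) δ) (fun t => ohIntegrand α (γ + t • h) p.1 p.2) := by
  have hγ' := hγ.2.1.continuous_deriv le_rfl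
  have hh' := hh.2.1.continuous_deriv le_rfl
  obtain ⟨C, hC⟩ := hfam.exists_bddLipOn_ohIntegrand
    (fun t _ => contDiff_add_smul hγ.2.1 hh.2.1 t) (fun t _ => periodic_add_smul hγ.1 hh.1 t)
    hc (zero_le_one.trans hα)
  refine ⟨fun p => |C| * (1 + 2 * (sqOsc (deriv γ) p.1 p.2 / |p.2| ^ α
    + sqOsc (deriv h) p.1 p.2 / |p.2| ^ α)), ?_, ?_⟩
  · exact ((integrable_const 1).add (((integrable_sqOsc_div hγ' hα hγ.2.2).add
      (integrable_sqOsc_div hh' hα hh.2.2)).const_mul 2)).const_mul |C|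
  filter_upwards [ae_torusMeasure] with p hp
  have hosc : ∀ y, BddLipOn (‖deriv γ y - deriv γ p.1‖ + ‖deriv h y - deriv h p.1‖)
      (Metric.ball (0 : ℝ) δ) (fun t => deriv (γ + t • h) y - deriv (γ + t • h) p.1) := by
    refine fun y => (BddLipOn.affine le_rfl le_rfl fun t ht => ?_).congr fun t _ => ?_
    · exact (mem_ball_zero_iff.1 ht).le.trans hδ
    · simp only [deriv_add_smul hγ.2.1 hh.2.1]
      module
  refine (hC (by fun_prop) hosc hp.2.le).mono ?_
  have hosc_nonneg : 0 ≤ segAvg (fun y => (‖deriv γ y - deriv γ p.1‖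
      + ‖deriv h y - deriv h p.1‖) ^ 2) p.1 p.2 := segAvg_nonneg (fun _ => sq_nonneg _) _ _
  rw [← add_div, ← mul_div_assoc]
  gcongr
  · exact le_abs_self C
  · exact segAvg_sq_add_le (by fun_prop) (by fun_prop) p.1 p.2

end LinearVariation

section ArcLengthVariation

lemma hasDerivAt_one_div_rpow {f : ℝ → ℝ} {f' x : ℝ} (hf : HasDerivAt f f' x) (hx : 0 < f x)
    (α : ℝ) : HasDerivAt (fun t => 1 / f t ^ α) (-(α * f' / f x ^ (α + 1))) x := by
  have hpow := (hf.rpow_const (p := α) (Or.inl hx.ne')).inv (Real.rpow_pos_of_pos hx α).ne'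
  simp only [one_div]
  refine hpow.congr_deriv ?_
  rw [Real.rpow_sub_one hx.ne', Real.rpow_add_one hx.ne']
  field_simp

variable {γ h : ℝ → Rn n} {α u w : ℝ}

lemma ArcLengthParam.regularCurve (harc : ArcLengthParam γ) : RegularCurve γ := fun u =>
  norm_ne_zero_iff.1 ((harc u).trans_ne one_ne_zero)

lemma ArcLengthParam.arcLen_eq (harc : ArcLengthParam γ) (u w : ℝ) : arcLen γ u w = |w| := by
  simp only [arcLen_eq_abs_mul_segAvg, harc _, segAvg_const, mul_one]

lemma ArcLengthParam.curveLen_eq (harc : ArcLengthParam γ) : curveLen γ = 1 := by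
  simp only [curveLen_eq_segAvg, harc _, segAvg_const]

/-- The first variation of the speed `|γ'|` of an arc-length curve `γ` in direction `h`. -/
def speedVariation (γ h : ℝ → Rn n) (u : ℝ) : ℝ := ⟪deriv γ u, deriv h u⟫

/-- The first variation of the integrand of the O'Hara energy at an arc-length curve `γ` in
direction `h`. -/
def ohVariation (α : ℝ) (γ h : ℝ → Rn n) (u w : ℝ) : ℝ :=
  α * segAvg (speedVariation γ h) u w / |w| ^ α
    - α * ⟪γ (u + w) - γ u, h (u + w) - h u⟫ / ‖γ (u + w) - γ u‖ ^ (α + 2)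
    + (1 / ‖γ (u + w) - γ u‖ ^ α - 1 / |w| ^ α)
      * (speedVariation γ h (u + w) + speedVariation γ h u)

lemma continuous_speedVariation (hγ : ContDiff ℝ 1 γ) (hh : ContDiff ℝ 1 h) :
    Continuous (speedVariation γ h) :=
  (hγ.continuous_deriv le_rfl).inner (hh.continuous_deriv le_rfl)

lemma periodic_speedVariation {c : ℝ} (hγ : Function.Periodic γ c) (hh : Function.Periodic h c) :
    Function.Periodic (speedVariation γ h) c := fun u => by
  rw [speedVariation, periodic_deriv hγ, periodic_deriv hh, speedVariation]

lemma measurable_ohVariation (hγ : ContDiff ℝ 1 γ) (hh : ContDiff ℝ 1 h) (α : ℝ) :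
    Measurable (fun p : ℝ × ℝ => ohVariation α γ h p.1 p.2) := by
  have hγ₀ := hγ.continuous
  have hh₀ := hh.continuous
  have hspeed := continuous_speedVariation hγ hh
  have hmean : Measurable fun p : ℝ × ℝ => segAvg (speedVariation γ h) p.1 p.2 :=
    (continuous_segAvg hspeed).measurable
  have hchord : Measurable fun p : ℝ × ℝ => ‖γ (p.1 + p.2) - γ p.1‖ :=
    (by fun_prop : Continuous _).measurable
  have hinner : Measurable fun p : ℝ × ℝ => ⟪γ (p.1 + p.2) - γ p.1, h (p.1 + p.2) - h p.1⟫ :=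
    (by fun_prop : Continuous _).measurable
  have hsum : Measurable fun p : ℝ × ℝ =>
      speedVariation γ h (p.1 + p.2) + speedVariation γ h p.1 :=
    (by fun_prop : Continuous _).measurable
  have habs : Measurable fun p : ℝ × ℝ => |p.2| := continuous_snd.abs.measurable
  exact (((hmean.const_mul α).div (habs.pow_const α)).sub
    ((hinner.const_mul α).div (hchord.pow_const (α + 2)))).add
    ((((hchord.pow_const α).const_div 1).sub ((habs.pow_const α).const_div 1)).mul hsum)

lemma hasDerivAt_norm_chord_add_smul (h : ℝ → Rn n) (hne : γ (u + w) ≠ γ u) :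
    HasDerivAt (fun t : ℝ => ‖(γ + t • h) (u + w) - (γ + t • h) u‖)
      (⟪γ (u + w) - γ u, h (u + w) - h u⟫ / ‖γ (u + w) - γ u‖) 0 := by
  refine (hasDerivAt_norm_add_smul (sub_ne_zero.2 hne) (h (u + w) - h u)).congr_of_eventuallyEq
    (Eventually.of_forall fun t => congrArg norm ?_)
  simp only [Pi.add_apply, Pi.smul_apply]
  module

namespace ArcLengthParam

lemma hasDerivAt_norm_deriv (harc : ArcLengthParam γ) (hγ : ContDiff ℝ 1 γ)
    (hh : ContDiff ℝ 1 h) (u : ℝ) :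
    HasDerivAt (fun t : ℝ => ‖deriv (γ + t • h) u‖) (speedVariation γ h u) 0 := by
  simpa only [deriv_add_smul hγ hh, harc u, div_one, speedVariation] using
    hasDerivAt_norm_add_smul (harc.regularCurve u) (deriv h u)

lemma hasDerivAt_arcLen (harc : ArcLengthParam γ) (hγ : ContDiff ℝ 1 γ) (hh : ContDiff ℝ 1 h)
    (u w : ℝ) :
    HasDerivAt (fun t : ℝ => arcLen (γ + t • h) u w) (|w| * segAvg (speedVariation γ h) u w) 0 := by
  simp only [arcLen_eq_abs_mul_segAvg, deriv_add_smul hγ hh]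
  refine ((hasDerivAt_segAvg_norm_add_smul (hγ.continuous_deriv le_rfl)
    (hh.continuous_deriv le_rfl) harc.regularCurve u w).const_mul |w|).congr_deriv ?_
  simp only [harc _, div_one]
  rfl

lemma continuousAt_curveLen (harc : ArcLengthParam γ) (hγ : ContDiff ℝ 1 γ)
    (hh : ContDiff ℝ 1 h) : ContinuousAt (fun t : ℝ => curveLen (γ + t • h)) 0 := by
  simpa only [arcLen_eq_abs_mul_segAvg, curveLen_eq_segAvg, abs_one, one_mul] using
    (harc.hasDerivAt_arcLen hγ hh 0 1).continuousAt

lemma idist_eq (harc : ArcLengthParam γ) (u : ℝ) (hw : |w| ≤ 1 / 2) : idist γ u w = |w| := by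
  rw [idist_eq_arcLen] <;> rw [harc.arcLen_eq]
  rw [harc.curveLen_eq]
  linarith

lemma hasDerivAt_idist (harc : ArcLengthParam γ) (hγ : ContDiff ℝ 1 γ) (hh : ContDiff ℝ 1 h)
    (u : ℝ) (hw : |w| < 1 / 2) :
    HasDerivAt (fun t : ℝ => idist (γ + t • h) u w) (|w| * segAvg (speedVariation γ h) u w) 0 := by
  have harcLen := harc.hasDerivAt_arcLen hγ hh u w
  have hshort : 2 * arcLen (γ + (0 : ℝ) • h) u w < curveLen (γ + (0 : ℝ) • h) := by
    rw [zero_smul, add_zero, harc.arcLen_eq, harc.curveLen_eq]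
    linarith
  refine harcLen.congr_of_eventuallyEq ?_
  filter_upwards [(harcLen.continuousAt.const_mul 2).eventually_lt
    (harc.continuousAt_curveLen hγ hh) hshort] with t ht
  exact idist_eq_arcLen ht.le

lemma hasDerivAt_ohIntegrand (harc : ArcLengthParam γ) (hγ : ContDiff ℝ 1 γ)
    (hh : ContDiff ℝ 1 h) (hw : |w| < 1 / 2) (hw₀ : w ≠ 0) (hne : γ (u + w) ≠ γ u) :
    HasDerivAt (fun t : ℝ => ohIntegrand α (γ + t • h) u w) (ohVariation α γ h u w) 0 := by
  have hchord_pos : 0 < ‖γ (u + w) - γ u‖ := norm_pos_iff.2 (sub_ne_zero.2 hne)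
  have hw_pos : 0 < |w| := abs_pos.2 hw₀
  have hγ_zero : γ + (0 : ℝ) • h = γ := by rw [zero_smul, add_zero]
  have hchord := hasDerivAt_one_div_rpow (hasDerivAt_norm_chord_add_smul h hne)
    (by rwa [hγ_zero]) α
  have hidist := hasDerivAt_one_div_rpow (harc.hasDerivAt_idist hγ hh u hw)
    (by rwa [hγ_zero, harc.idist_eq u hw.le]) α
  refine (((hchord.sub hidist).mul (harc.hasDerivAt_norm_deriv hγ hh (u + w))).mul
    (harc.hasDerivAt_norm_deriv hγ hh u)).congr_deriv ?_
  simp only [Pi.sub_apply, Pi.mul_apply, hγ_zero, harc _, harc.idist_eq u hw.le, mul_one,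
    ohVariation, Real.rpow_add hchord_pos, Real.rpow_add hw_pos, Real.rpow_one, Real.rpow_two]
  have hchord_rpow := (Real.rpow_pos_of_pos hchord_pos α).ne'
  have hw_rpow := (Real.rpow_pos_of_pos hw_pos α).ne'
  field_simp
  ring

end ArcLengthParam

end ArcLengthVariation

section EnergyDerivative

variable {γ h : ℝ → Rn n} {α : ℝ}

theorem hasDerivAt_oharaER (hα : 1 ≤ α) (hγ : MemH1 ((α - 1) / 2) γ) (hinj : PerInjective γ)
    (harc : ArcLengthParam γ) (hh : MemH1 ((α - 1) / 2) h) :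
    Integrable (fun p : ℝ × ℝ => ohVariation α γ h p.1 p.2) torusMeasure ∧
      HasDerivAt (fun t : ℝ => oharaER α (γ + t • h))
        (∫ p, ohVariation α γ h p.1 p.2 ∂torusMeasure) 0 := by
  obtain ⟨c, hc, B, δ, hδ, hfam⟩ := exists_regularFamily_deriv_add_smul hγ.2.1 hh.2.1 hγ.1 hh.1
    hinj harc.regularCurve
  obtain ⟨bound, hbound, hlip⟩ := hfam.exists_integrable_bddLipOn_ohIntegrand hc hδ.2 hα hγ hh
  have hmeas (t : ℝ) : AEStronglyMeasurable
      (fun p : ℝ × ℝ => ohIntegrand α (γ + t • h) p.1 p.2) torusMeasure :=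
    (measurable_ohIntegrand (contDiff_add_smul hγ.2.1 hh.2.1 t) α).aestronglyMeasurable
  have hball : Metric.ball (0 : ℝ) δ ∈ 𝓝 0 := Metric.ball_mem_nhds 0 hδ.1
  have hint₀ : Integrable (fun p : ℝ × ℝ => ohIntegrand α (γ + (0 : ℝ) • h) p.1 p.2)
      torusMeasure :=
    hbound.mono' (hmeas 0) (hlip.mono fun p hp => hp.norm_le (Metric.mem_ball_self hδ.1))
  have hderiv : ∀ᵐ p ∂torusMeasure, HasDerivAt (fun t : ℝ => ohIntegrand α (γ + t • h) p.1 p.2)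
      (ohVariation α γ h p.1 p.2) 0 := by
    filter_upwards [ae_torusMeasure] with p hp
    exact harc.hasDerivAt_ohIntegrand hγ.2.1 hh.2.1 hp.2 hp.1
      (hinj.apply_add_ne p.1 (hp.2.trans one_half_lt_one) hp.1)
  obtain ⟨hint, hdiff⟩ := hasDerivAt_integral_of_dominated_loc_of_lip hball
    (Eventually.of_forall hmeas) hint₀
    (measurable_ohVariation hγ.2.1 hh.2.1 α).aestronglyMeasurable
    (hlip.mono fun p hp => hp.lipschitzOnWith) hbound hderiv
  refine ⟨hint, hdiff.congr_of_eventuallyEq (mem_of_superset hball fun t ht => ?_)⟩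
  have hcontDiff := contDiff_add_smul hγ.2.1 hh.2.1 t
  have hperiodic := periodic_add_smul hγ.1 hh.1 t
  exact oharaER_eq_integral hcontDiff hperiodic (hfam.perInjective hc ht hcontDiff hperiodic)
    (zero_le_one.trans hα)

lemma hasDirDeriv_iff_hasDerivAt {F : (ℝ → Rn n) → ℝ} {d : ℝ} :
    HasDirDeriv F γ h d ↔ HasDerivAt (fun t : ℝ => F (γ + t • h)) d 0 := by
  simp only [HasDirDeriv, hasDerivAt_iff_tendsto_slope, slope_fun_def_field, zero_smul, add_zero,
    sub_zero]

end EnergyDerivative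

section TruncatedDomain

lemma mem_Wset_iff {ε w : ℝ} (hε : 0 < ε) : w ∈ Wset ε ↔ ε ≤ |w| ∧ |w| ≤ 1 / 2 := by
  simp only [Wset, mem_union, mem_Icc, abs_le, le_abs']
  grind

lemma isCompact_Wset (ε : ℝ) : IsCompact (Wset ε) := isCompact_Icc.union isCompact_Icc

lemma torusMeasure_restrict {ε : ℝ} (hε : 0 < ε) :
    torusMeasure.restrict {p : ℝ × ℝ | ε ≤ |p.2|}
      = (volume.restrict (Ioc (0 : ℝ) 1)).prod (volume.restrict (Wset ε)) := by
  have hmeas : MeasurableSet {w : ℝ | ε ≤ |w|} :=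
    (isClosed_le continuous_const continuous_abs).measurableSet
  have hWset : Wset ε = {w : ℝ | ε ≤ |w|} ∩ Icc (-(1 : ℝ) / 2) (1 / 2) := by
    ext w
    rw [mem_Wset_iff hε, mem_inter_iff, mem_ofPred_eq, mem_Icc, abs_le, neg_div]
  have hprod : {p : ℝ × ℝ | ε ≤ |p.2|} = univ ×ˢ {w : ℝ | ε ≤ |w|} := by
    ext p
    simp
  rw [hprod, torusMeasure, ← Measure.prod_restrict, Measure.restrict_univ,
    Measure.restrict_restrict hmeas, hWset,
    Measure.restrict_congr_set ((ae_eq_refl _).inter (Ioo_ae_eq_Icc (μ := volume)))]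

lemma aecover_torusMeasure :
    AECover torusMeasure (𝓝[>] (0 : ℝ)) (fun ε => {p : ℝ × ℝ | ε ≤ |p.2|}) where
  ae_eventually_mem := by
    filter_upwards [ae_torusMeasure] with p hp
    filter_upwards [mem_nhdsWithin_of_mem_nhds (Iic_mem_nhds (abs_pos.2 hp.1))] with ε hε
    exact hε
  measurableSet _ := (isClosed_le continuous_const continuous_snd.abs).measurableSet

lemma setIntegral_eq_zero_of_odd {s : Set ℝ} {g : ℝ → ℝ} (hs : MeasurableSet s)
    (hneg : ∀ w, -w ∈ s ↔ w ∈ s) (hg : ∀ w, g (-w) = -g w) : ∫ w in s, g w = 0 := by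
  have hodd : ∀ w, s.indicator g (-w) = -s.indicator g w := fun w => by
    by_cases hw : w ∈ s
    · rw [indicator_of_mem hw, indicator_of_mem ((hneg w).2 hw), hg]
    · rw [indicator_of_notMem hw, indicator_of_notMem (mt (hneg w).1 hw), neg_zero]
  rw [← integral_indicator hs]
  have hreflect := integral_neg_eq_self (s.indicator g) volume
  simp only [hodd, integral_neg] at hreflect
  linarith

end TruncatedDomain

section PrincipalValue

variable {γ h : ℝ → Rn n} {α ε w : ℝ}

/-- The integrand of the principal value formula for the first variation of `E^α`. -/
def pvIntegrand (α : ℝ) (γ h : ℝ → Rn n) (u w : ℝ) : ℝ :=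
  (α - 2) * speedVariation γ h u / |w| ^ α
    + 2 * speedVariation γ h u / ‖γ (u + w) - γ u‖ ^ α
    - α * ⟪γ (u + w) - γ u, h (u + w) - h u⟫ / ‖γ (u + w) - γ u‖ ^ (α + 2)

lemma ohVariation_sub_pvIntegrand (α : ℝ) (γ h : ℝ → Rn n) (u w : ℝ) :
    ohVariation α γ h u w - pvIntegrand α γ h u w
      = α / |w| ^ α * (segAvg (speedVariation γ h) u w - speedVariation γ h u)
        - 1 / |w| ^ α * (speedVariation γ h (u + w) - speedVariation γ h u)
        + (speedVariation γ h (u + w) / ‖γ (u + w) - γ u‖ ^ α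
          - speedVariation γ h u / ‖γ (u + w) - γ u‖ ^ α) := by
  unfold ohVariation pvIntegrand
  ring

lemma integral_comp_add_div_rpow_norm_chord {f : ℝ → ℝ} (hf : Function.Periodic f 1)
    (hγ : Function.Periodic γ 1) (α w : ℝ) :
    ∫ u in (0 : ℝ)..1, f (u + w) / ‖γ (u + w) - γ u‖ ^ α
      = ∫ u in (0 : ℝ)..1, f u / ‖γ (u + -w) - γ u‖ ^ α := by
  have hperiodic : Function.Periodic (fun u => f u / ‖γ (u + -w) - γ u‖ ^ α) 1 := fun u => by
    simp only [hf u, hγ u, add_right_comm u 1, hγ (u + -w)]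
  rw [← integral_comp_add_of_periodic hperiodic w]
  simp only [add_neg_cancel_right, norm_sub_rev]

lemma integral_segAvg_sub_of_periodic {f : ℝ → ℝ} (hf : Continuous f)
    (hfp : Function.Periodic f 1) (w : ℝ) : ∫ u in (0 : ℝ)..1, (segAvg f u w - f u) = 0 := by
  have hmean : Continuous fun u => segAvg f u w := (continuous_segAvg hf).comp (.prodMk_left w)
  rw [intervalIntegral.integral_sub (hmean.intervalIntegrable 0 1) (hf.intervalIntegrable 0 1),
    integral_segAvg_of_periodic hf hfp, sub_self]

lemma integral_comp_add_sub_of_periodic {f : ℝ → ℝ} (hf : Continuous f)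
    (hfp : Function.Periodic f 1) (w : ℝ) : ∫ u in (0 : ℝ)..1, (f (u + w) - f u) = 0 := by
  have hshift : Continuous fun u => f (u + w) := by fun_prop
  rw [intervalIntegral.integral_sub (hshift.intervalIntegrable 0 1) (hf.intervalIntegrable 0 1),
    integral_comp_add_of_periodic hfp, sub_self]

lemma integral_ohVariation_sub_pvIntegrand (hγ : ContDiff ℝ 1 γ) (hh : ContDiff ℝ 1 h)
    (hγp : Function.Periodic γ 1) (hhp : Function.Periodic h 1) (hne : ∀ u, γ (u + w) ≠ γ u) :
    ∫ u in (0 : ℝ)..1, (ohVariation α γ h u w - pvIntegrand α γ h u w)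
      = (∫ u in (0 : ℝ)..1, speedVariation γ h u / ‖γ (u + -w) - γ u‖ ^ α)
        - ∫ u in (0 : ℝ)..1, speedVariation γ h u / ‖γ (u + w) - γ u‖ ^ α := by
  simp only [ohVariation_sub_pvIntegrand]
  have hγ₀ := hγ.continuous
  have hφ : Continuous (speedVariation γ h) := continuous_speedVariation hγ hh
  have hφp : Function.Periodic (speedVariation γ h) 1 := periodic_speedVariation hγp hhp
  generalize speedVariation γ h = φ at hφ hφp ⊢
  have hφw : Continuous fun u => φ (u + w) := by fun_prop
  have hmean : Continuous fun u => segAvg φ u w := (continuous_segAvg hφ).comp (.prodMk_left w)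
  have hchord : ∀ u, 0 < ‖γ (u + w) - γ u‖ := fun u => norm_pos_iff.2 (sub_ne_zero.2 (hne u))
  have hchord_rpow : Continuous fun u => ‖γ (u + w) - γ u‖ ^ α :=
    Continuous.rpow_const (by fun_prop) fun u => Or.inl (hchord u).ne'
  have hchord_ne : ∀ u, ‖γ (u + w) - γ u‖ ^ α ≠ 0 := fun u =>
    (Real.rpow_pos_of_pos (hchord u) α).ne'
  have hmean_int : IntervalIntegrable (fun u => α / |w| ^ α * (segAvg φ u w - φ u)) volume 0 1 :=
    ((hmean.sub hφ).const_mul _).intervalIntegrable 0 1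
  have hshift_int : IntervalIntegrable (fun u => 1 / |w| ^ α * (φ (u + w) - φ u)) volume 0 1 :=
    ((hφw.sub hφ).const_mul _).intervalIntegrable 0 1
  have hdiv_w_int : IntervalIntegrable (fun u => φ (u + w) / ‖γ (u + w) - γ u‖ ^ α) volume 0 1 :=
    (hφw.div hchord_rpow hchord_ne).intervalIntegrable 0 1
  have hdiv_int : IntervalIntegrable (fun u => φ u / ‖γ (u + w) - γ u‖ ^ α) volume 0 1 :=
    (hφ.div hchord_rpow hchord_ne).intervalIntegrable 0 1
  rw [intervalIntegral.integral_add (hmean_int.sub hshift_int) (hdiv_w_int.sub hdiv_int),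
    intervalIntegral.integral_sub hmean_int hshift_int,
    intervalIntegral.integral_sub hdiv_w_int hdiv_int,
    intervalIntegral.integral_const_mul, intervalIntegral.integral_const_mul,
    integral_segAvg_sub_of_periodic hφ hφp, integral_comp_add_sub_of_periodic hφ hφp,
    integral_comp_add_div_rpow_norm_chord hφp hγp]
  ring

lemma continuousOn_pvIntegrand (hγ : ContDiff ℝ 1 γ) (hh : ContDiff ℝ 1 h) (α : ℝ) :
    ContinuousOn (fun p : ℝ × ℝ => pvIntegrand α γ h p.1 p.2)
      {p | p.2 ≠ 0 ∧ γ (p.1 + p.2) ≠ γ p.1} := by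
  have hγ₀ := hγ.continuous
  have hh₀ := hh.continuous
  have hspeed := continuous_speedVariation hγ hh
  refine continuousOn_of_forall_continuousAt fun p hp => ?_
  have habs : 0 < |p.2| := abs_pos.2 hp.1
  have hchord : 0 < ‖γ (p.1 + p.2) - γ p.1‖ := norm_pos_iff.2 (sub_ne_zero.2 hp.2)
  have hrpow {f : ℝ × ℝ → ℝ} (hf : Continuous f) (hfp : 0 < f p) (β : ℝ) :
      ContinuousAt (fun q => f q ^ β) p ∧ f p ^ β ≠ 0 :=
    ⟨hf.continuousAt.rpow_const (Or.inl hfp.ne'), (Real.rpow_pos_of_pos hfp β).ne'⟩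
  have habs_rpow := hrpow (f := fun q => |q.2|) (by fun_prop) habs α
  have hchord_rpow := hrpow (f := fun q => ‖γ (q.1 + q.2) - γ q.1‖) (by fun_prop) hchord
  unfold pvIntegrand
  exact ((ContinuousAt.div (by fun_prop) habs_rpow.1 habs_rpow.2).add
    (ContinuousAt.div (by fun_prop) (hchord_rpow α).1 (hchord_rpow α).2)).sub
    (ContinuousAt.div (by fun_prop) (hchord_rpow (α + 2)).1 (hchord_rpow (α + 2)).2)

lemma integrable_pvIntegrand (hγ : ContDiff ℝ 1 γ) (hh : ContDiff ℝ 1 h) (hinj : PerInjective γ)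
    (hε : 0 < ε) :
    Integrable (fun p : ℝ × ℝ => pvIntegrand α γ h p.1 p.2)
      ((volume.restrict (Ioc (0 : ℝ) 1)).prod (volume.restrict (Wset ε))) := by
  have hsub : Icc (0 : ℝ) 1 ×ˢ Wset ε ⊆ {p | p.2 ≠ 0 ∧ γ (p.1 + p.2) ≠ γ p.1} := fun p hp => by
    obtain ⟨hεp, hp₂⟩ := (mem_Wset_iff hε).1 hp.2
    have hp₀ := abs_pos.1 (hε.trans_le hεp)
    exact ⟨hp₀, hinj.apply_add_ne p.1 (hp₂.trans_lt one_half_lt_one) hp₀⟩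
  rw [Measure.prod_restrict]
  exact (((continuousOn_pvIntegrand hγ hh α).mono hsub).integrableOn_compact
    (isCompact_Icc.prod (isCompact_Wset ε))).mono_set (prod_mono Ioc_subset_Icc_self Subset.rfl)

lemma integral_pvIntegrand (hγ : ContDiff ℝ 1 γ) (hh : ContDiff ℝ 1 h)
    (hγp : Function.Periodic γ 1) (hhp : Function.Periodic h 1) (hinj : PerInjective γ)
    (hint : Integrable (fun p : ℝ × ℝ => ohVariation α γ h p.1 p.2) torusMeasure) (hε : 0 < ε) :
    ∫ u in Ioc (0 : ℝ) 1, ∫ w in Wset ε, pvIntegrand α γ h u w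
      = ∫ p in {p : ℝ × ℝ | ε ≤ |p.2|}, ohVariation α γ h p.1 p.2 ∂torusMeasure := by
  have hvar := hint.restrict (s := {p : ℝ × ℝ | ε ≤ |p.2|})
  rw [torusMeasure_restrict hε] at hvar ⊢
  have hpv := integrable_pvIntegrand (α := α) hγ hh hinj hε
  have hslice : ∀ w ∈ Wset ε,
      (∫ u in Ioc (0 : ℝ) 1, (ohVariation α γ h u w - pvIntegrand α γ h u w))
        = (∫ u in (0 : ℝ)..1, speedVariation γ h u / ‖γ (u + -w) - γ u‖ ^ α)
          - ∫ u in (0 : ℝ)..1, speedVariation γ h u / ‖γ (u + w) - γ u‖ ^ α := fun w hw => by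
    obtain ⟨hεw, hw₂⟩ := (mem_Wset_iff hε).1 hw
    rw [← intervalIntegral.integral_of_le zero_le_one]
    exact integral_ohVariation_sub_pvIntegrand hγ hh hγp hhp fun u =>
      hinj.apply_add_ne u (hw₂.trans_lt one_half_lt_one) (abs_pos.1 (hε.trans_le hεw))
  have hdiff : Integrable
      (fun p : ℝ × ℝ => ohVariation α γ h p.1 p.2 - pvIntegrand α γ h p.1 p.2)
      ((volume.restrict (Ioc (0 : ℝ) 1)).prod (volume.restrict (Wset ε))) := hvar.sub hpv
  rw [← integral_prod _ hpv, eq_comm, ← sub_eq_zero, ← integral_sub hvar hpv,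
    integral_prod_symm _ hdiff]
  refine (setIntegral_congr_fun (isCompact_Wset ε).measurableSet hslice).trans ?_
  refine setIntegral_eq_zero_of_odd (isCompact_Wset ε).measurableSet (fun w => ?_) fun w => ?_
  · simp only [mem_Wset_iff hε, abs_neg]
  · rw [neg_neg, neg_sub]

end PrincipalValue

theorem statement1_general {α : ℝ} (hα : 1 ≤ α) {γ h : ℝ → Rn n}
    (hγ : MemH1 ((α - 1) / 2) γ) (hinj : PerInjective γ) (harc : ArcLengthParam γ)
    (hh : MemH1 ((α - 1) / 2) h) :
    ∃ d : ℝ,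
      HasDirDeriv (oharaER α) γ h d ∧
      Tendsto (fun ε : ℝ => ∫ u in Ioc (0:ℝ) 1, ∫ w in Wset ε,
          ((α - 2) * ⟪deriv γ u, deriv h u⟫ / |w| ^ α
            + 2 * ⟪deriv γ u, deriv h u⟫ / ‖γ (u + w) - γ u‖ ^ α
            - α * ⟪γ (u + w) - γ u, h (u + w) - h u⟫ / ‖γ (u + w) - γ u‖ ^ (α + 2)))
        (𝓝[>] (0:ℝ)) (𝓝 d) := by
  obtain ⟨hint, hderiv⟩ := hasDerivAt_oharaER hα hγ hinj harc hh
  refine ⟨∫ p, ohVariation α γ h p.1 p.2 ∂torusMeasure, hasDirDeriv_iff_hasDerivAt.2 hderiv, ?_⟩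
  refine (aecover_torusMeasure.integral_tendsto_of_countably_generated hint).congr' ?_
  filter_upwards [self_mem_nhdsWithin] with ε hε
  exact (integral_pvIntegrand hγ.2.1 hh.2.1 hγ.1 hh.1 hinj hint hε).symm

/-- For `α ∈ (2,3)`, an injective arc-length curve `γ ∈ H^{(1+α)/2,2}` and any
direction `h ∈ H^{(1+α)/2,2}`, the directional derivative of `E^α` at `γ` in direction `h`
exists and is given by the stated principal value. -/
theorem statement1 {n : ℕ} (hn : 2 ≤ n) {α : ℝ} (hα : α ∈ Ioo (2:ℝ) 3)
    {γ : ℝ → Rn n} (hγ : MemH1 ((α - 1) / 2) γ) (hinj : PerInjective γ)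
    (harc : ArcLengthParam γ) :
    ∀ h : ℝ → Rn n, MemH1 ((α - 1) / 2) h →
      ∃ d : ℝ,
        HasDirDeriv (oharaER α) γ h d ∧
        Tendsto (fun ε : ℝ => ∫ u in Ioc (0:ℝ) 1, ∫ w in Wset ε,
            ((α - 2) * ⟪deriv γ u, deriv h u⟫ / |w| ^ α
              + 2 * ⟪deriv γ u, deriv h u⟫ / ‖γ (u + w) - γ u‖ ^ α
              - α * ⟪γ (u + w) - γ u, h (u + w) - h u⟫ / ‖γ (u + w) - γ u‖ ^ (α + 2)))
          (𝓝[>] (0:ℝ)) (𝓝 d) :=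
  fun _ hh => statement1_general (by linarith [hα.1]) hγ hinj harc hh

end
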